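/- arXiv:2411.14791 — 4 statements merged into one kernel-verified Lean document; each statement's English description precedes it below -/
import Mathlib

section
/- Let (H, Σ, Υ, Φ) be an expanding gluing data with parameters m, k ≥ 2 satisfying the condition that for any two distinct labels j, ℓ ∈ {1,…,k} the edges Φ(j) and Φ(ℓ) are disjoint as subsets of V(H). Let F̂ be the induced rational self-map of ℙ^{2^k−1} and M_e the invariant manifold. Then quadratic attraction holds: if at a point ξ ∈ ℙ^{2^k−1} each of the defining equations [x] = ∏_{j: x_j=1} [e_j] of M_e is satisfied up to an additive error of order O(ε), then at F̂(ξ) each defining equation is satisfied up to an additive error of order O(ε²). Precisely, for every point ζ of M_e at which F̂ is defined there are a neighborhood U of ζ and constants C > 0, ε_0 > 0 such that: for all ξ ∈ U and 0 < ε ≤ ε_0, if every defining equation of M_e holds at ξ with error at most ε, then every defining equation of M_e holds at F̂(ξ) with error at most C·ε². -/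
open scoped Classical
open Finset Filter

noncomputable section

/-- A finite multigraph: a finite vertex type together with a multiset of
(unordered) edges. -/
structure MGraph where
  V : Type
  fin : Fintype V
  E : Multiset (Sym2 V)

attribute [instance] MGraph.fin

namespace MGraph

/-- A `{0,1}`-vertex assignment is independent if no two vertices assigned `1`
form an edge. -/
def Indep (G : MGraph) (σ : G.V → Bool) : Prop :=
  ∀ v w : G.V, s(v, w) ∈ G.E → ¬(σ v = true ∧ σ w = true)

/-- The number of vertices assigned `1`. -/
def ones (G : MGraph) (σ : G.V → Bool) : ℕ :=
  (Finset.univ.filter fun v => σ v = true).card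

/-- The degree of a vertex: the number of adjacent edges. -/
def degree (G : MGraph) (v : G.V) : ℕ :=
  (G.E.filter fun e => v ∈ e).card

/-- A singleton graph: one vertex, no edges. -/
def IsSingleton (G : MGraph) : Prop :=
  (∀ v w : G.V, v = w) ∧ G.E = 0

/-- Connectivity of a multigraph. -/
def Connected (G : MGraph) : Prop :=
  ∀ v w : G.V, Relation.ReflTransGen (fun a b => s(a, b) ∈ G.E) v w

/-- The underlying simple graph of a multigraph. -/
def toSimple (G : MGraph) : SimpleGraph G.V where
  Adj v w := v ≠ w ∧ s(v, w) ∈ G.E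
  symm := ⟨fun v w h => ⟨h.1.symm, by rw [Sym2.eq_swap]; exact h.2⟩⟩
  loopless := ⟨fun v h => h.1 rfl⟩

/-- A finite set of vertices is independent if no two of its members form an edge. -/
def IndepFinset (G : MGraph) (I : Finset G.V) : Prop :=
  ∀ v ∈ I, ∀ w ∈ I, s(v, w) ∉ G.E

end MGraph

/-- The conditioned independence polynomial `Z_G(λ, x)` of a multigraph with
marked vertices, evaluated in any commutative ring at `lam`. -/
def Zcond {k : ℕ} (R : Type) [CommRing R] (lam : R) (G : MGraph)
    (marks : Fin k → G.V) (x : Fin k → Bool) : R :=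
  ∑ σ : G.V → Bool,
    if G.Indep σ ∧ (∀ j, σ (marks j) = x j) then lam ^ G.ones σ else 0

/-- The (full) independence polynomial `Z_G(λ)`. -/
def Zfull (R : Type) [CommRing R] (lam : R) (G : MGraph) : R :=
  ∑ σ : G.V → Bool, if G.Indep σ then lam ^ G.ones σ else 0

/-- A multigraph with `k` marked vertices labeled `1, …, k`. -/
structure MarkedGraph (k : ℕ) where
  G : MGraph
  mark : Fin k → G.V

/-- `Z_G(λ, x)` for a marked graph. -/
def MarkedGraph.Z {k : ℕ} (R : Type) [CommRing R] (lam : R)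
    (A : MarkedGraph k) (x : Fin k → Bool) : R :=
  Zcond R lam A.G A.mark x

/-- The all-zeros tuple `(0, …, 0)`. -/
def zeroT (k : ℕ) : Fin k → Bool := fun _ => false

/-- The all-ones tuple `(1, …, 1)`. -/
def oneT (k : ℕ) : Fin k → Bool := fun _ => true

/-- The `j`-th standard basis tuple `e_j`. -/
def unitT {k : ℕ} (j : Fin k) : Fin k → Bool := fun i => if i = j then true else false

/-- The number of `1`-entries of a binary tuple. -/
def wt {k : ℕ} (x : Fin k → Bool) : ℕ := (Finset.univ.filter fun j => x j = true).card

/-- A set of vertices agrees with a binary tuple `x` when it contains the marked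
vertex labeled `j` iff `x j = 1`. -/
def Agrees {k : ℕ} (A : MarkedGraph k) (I : Finset A.G.V) (x : Fin k → Bool) : Prop :=
  ∀ j, A.mark j ∈ I ↔ x j = true

/-- A marked graph is maximally independent if for each binary tuple `x` there is a
unique independent set of maximal cardinality agreeing with `x`, and moreover
`#I(1,…,1) = #I(0,…,0) + k`. -/
def MaxIndependent {k : ℕ} (A : MarkedGraph k) : Prop :=
  (∀ x : Fin k → Bool, ∃ I : Finset A.G.V,
    (A.G.IndepFinset I ∧ Agrees A I x) ∧
    (∀ J, A.G.IndepFinset J ∧ Agrees A J x → J.card ≤ I.card) ∧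
    (∀ J, A.G.IndepFinset J ∧ Agrees A J x → J.card = I.card → J = I)) ∧
  (∀ I₁ I₀ : Finset A.G.V,
    ((A.G.IndepFinset I₁ ∧ Agrees A I₁ (oneT k)) ∧
      ∀ J, A.G.IndepFinset J ∧ Agrees A J (oneT k) → J.card ≤ I₁.card) →
    ((A.G.IndepFinset I₀ ∧ Agrees A I₀ (zeroT k)) ∧
      ∀ J, A.G.IndepFinset J ∧ Agrees A J (zeroT k) → J.card ≤ I₀.card) →
    I₁.card = I₀.card + k)

/-- Gluing data `(H, Σ, Υ, Φ)` with parameters `m, k`: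
a gluing scheme `H` (a labeled multi-hypergraph on `m` vertices, each vertex lying
in exactly one edge of each of the `k` labels), connecting graphs `Σ_e` with roots,
attaching maps `Υ_e`, and an injective labeling map `Φ`. -/
structure GluingData (m k : ℕ) where
  /-- index type for the edge multi-set of the gluing scheme `H` -/
  EIdx : Type
  efin : Fintype EIdx
  /-- the vertex set of an edge of `H` -/
  edge : EIdx → Finset (Fin m)
  edge_nonempty : ∀ e, (edge e).Nonempty
  /-- the label of an edge -/
  label : EIdx → Fin k
  /-- for each label `j`, the edges labeled `j` partition the vertex set of `H` -/
  mem_unique : ∀ (j : Fin k) (i : Fin m), ∃! e : EIdx, label e = j ∧ i ∈ edge e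
  /-- the connecting graphs `Σ_e` -/
  Sig : EIdx → MGraph
  Sig_nonempty : ∀ e, Nonempty (Sig e).V
  Sig_connected : ∀ e, (Sig e).Connected
  /-- the root of `Σ_e` -/
  root : (e : EIdx) → (Sig e).V
  /-- the attaching maps `Υ_e` (only their values on members of `e` matter) -/
  att : (e : EIdx) → Fin m → (Sig e).V
  /-- the labeling map `Φ` -/
  Phi : Fin k → EIdx
  Phi_inj : Function.Injective Phi

attribute [instance] GluingData.efin

namespace GluingData

variable {m k : ℕ}

/-- Disjoint union of the `m` copies of `A` and of the connecting graphs. -/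
def Carrier (D : GluingData m k) (A : MarkedGraph k) : Type :=
  (Fin m × A.G.V) ⊕ (Σ e : D.EIdx, (D.Sig e).V)

instance (D : GluingData m k) (A : MarkedGraph k) : Fintype (D.Carrier A) := by
  unfold Carrier; infer_instance

/-- The gluing identifications: the marked vertex labeled `ℓ(e)` of the copy `i ∈ e`
is identified with `Υ_e(w_i)` in `Σ_e`. -/
def glueRel (D : GluingData m k) (A : MarkedGraph k) :
    D.Carrier A → D.Carrier A → Prop := fun a b =>
  ∃ (e : D.EIdx) (i : Fin m), i ∈ D.edge e ∧
    a = Sum.inl (i, A.mark (D.label e)) ∧ b = Sum.inr ⟨e, D.att e i⟩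

/-- Vertices of `R(A)`. -/
def RV (D : GluingData m k) (A : MarkedGraph k) : Type := Quot (D.glueRel A)

instance (D : GluingData m k) (A : MarkedGraph k) : Fintype (D.RV A) :=
  Fintype.ofSurjective (Quot.mk _) (fun b => Quot.inductionOn b fun a => ⟨a, rfl⟩)

/-- The graph recursion `R` determined by the gluing data. -/
def RGraph (D : GluingData m k) (A : MarkedGraph k) : MarkedGraph k where
  G := { V := D.RV A
         fin := inferInstance
         E := (∑ i : Fin m, A.G.E.map (Sym2.map fun v =>
                 (Quot.mk (D.glueRel A) (Sum.inl (i, v)) : D.RV A))) +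
              ∑ e : D.EIdx, (D.Sig e).E.map (Sym2.map fun v =>
                 (Quot.mk (D.glueRel A) (Sum.inr ⟨e, v⟩) : D.RV A)) }
  mark := fun j =>
    (Quot.mk (D.glueRel A) (Sum.inr ⟨D.Phi j, D.root (D.Phi j)⟩) : D.RV A)

/-- `‖Y|_e‖`: the number of copies `i ∈ e` whose marked vertex labeled `ℓ(e)` is
assigned `1` by `Y`. -/
def normY (D : GluingData m k) (e : D.EIdx) (Y : Fin m → Fin k → Bool) : ℕ :=
  ((D.edge e).filter fun i => Y i (D.label e) = true).card

/-- `Z_{Σ_e}(λ, Y|_e, x|_e)`: the conditioned independence polynomial of the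
connecting graph `Σ_e`, given boundary conditions `Y` on the attached copies and
`x` at the root. -/
def ZE (D : GluingData m k) (R : Type) [CommRing R] (lam : R) (e : D.EIdx)
    (Y : Fin m → Fin k → Bool) (x : Fin k → Bool) : R :=
  ∑ σ : (D.Sig e).V → Bool,
    if (D.Sig e).Indep σ ∧ (∀ i ∈ D.edge e, σ (D.att e i) = Y i (D.label e)) ∧
        (∀ j, D.Phi j = e → σ (D.root e) = x j)
      then lam ^ (D.Sig e).ones σ else 0

/-- `Z_{Σ_e}(λ, Y_e, x|_e)` where `Y_e` is an assignment to the vertices of the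
single edge `e`. -/
def ZEdge (D : GluingData m k) (R : Type) [CommRing R] (lam : R) (e : D.EIdx)
    (Ye : {i // i ∈ D.edge e} → Bool) (x : Fin k → Bool) : R :=
  ∑ σ : (D.Sig e).V → Bool,
    if (D.Sig e).Indep σ ∧ (∀ i : {i // i ∈ D.edge e}, σ (D.att e i.1) = Ye i) ∧
        (∀ j, D.Phi j = e → σ (D.root e) = x j)
      then lam ^ (D.Sig e).ones σ else 0

/-- `‖Y_e‖`: the number of `1`-entries of an assignment to the vertices of `e`. -/
def normYe (D : GluingData m k) (e : D.EIdx) (Ye : {i // i ∈ D.edge e} → Bool) : ℕ :=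
  (Finset.univ.filter fun i => Ye i = true).card

/-- The label dynamics `Λ(j) = ℓ(Φ(j))`. -/
def Lam (D : GluingData m k) : Fin k → Fin k := fun j => D.label (D.Phi j)

/-- A label is periodic if it is periodic for `Λ`. -/
def PeriodicLabel (D : GluingData m k) (j : Fin k) : Prop :=
  ∃ p, 1 ≤ p ∧ D.Lam^[p] j = j

/-- A label is critical if `#Φ(j) ≥ 2`. -/
def CriticalLabel (D : GluingData m k) (j : Fin k) : Prop :=
  2 ≤ (D.edge (D.Phi j)).card

/-- Non-degenerate: no periodic critical labels. -/
def NonDegenerate (D : GluingData m k) : Prop :=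
  ∀ j, D.PeriodicLabel j → ¬D.CriticalLabel j

/-- Stable: non-degenerate and the connecting graph `Σ_{Φ(j)}` is a singleton for
every periodic label `j`. -/
def Stable (D : GluingData m k) : Prop :=
  D.NonDegenerate ∧ ∀ j, D.PeriodicLabel j → (D.Sig (D.Phi j)).IsSingleton

/-- The edge `Φ_n(j)` of the gluing scheme `H_n` of the `n`-th iterate of the graph
recursion, as a set of copies indexed by words of length `n`:
`Φ_n(j) = Φ(j) × Φ_{n−1}(Λ(j))`. -/
def PhiSet (D : GluingData m k) (n : ℕ) (j : Fin k) : Finset (Fin n → Fin m) :=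
  Finset.univ.filter fun w => ∀ t : Fin n, w t ∈ D.edge (D.Phi (D.Lam^[(t : ℕ)] j))

/-- Expanding: for some iterate `n ≥ 1` of the recursion, the edges `Φ_n(j)` are
pairwise disjoint subsets of `V(H_n)`. -/
def Expanding (D : GluingData m k) : Prop :=
  ∃ n, 1 ≤ n ∧ ∀ j ℓ : Fin k, j ≠ ℓ → Disjoint (D.PhiSet n j) (D.PhiSet n ℓ)

end GluingData

/-- The singleton graph `K_1`. -/
def K1 : MGraph := { V := PUnit, fin := inferInstance, E := 0 }

lemma K1_connected : K1.Connected := by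
  intro v w
  cases v; cases w
  exact Relation.ReflTransGen.refl

namespace GluingData

variable {m k : ℕ}

/-- The simplified gluing data: every connecting graph replaced by a singleton. -/
def simplified (D : GluingData m k) : GluingData m k :=
  { D with
    Sig := fun _ => K1
    Sig_nonempty := fun _ => ⟨PUnit.unit⟩
    Sig_connected := fun _ => K1_connected
    root := fun _ => PUnit.unit
    att := fun _ _ => PUnit.unit }

/-- The homogeneous polynomial map `F : ℂ^{2^k} → ℂ^{2^k}` induced by the recursion
(for a fixed parameter `lam`). -/
def Fmap (D : GluingData m k) (lam : ℂ) (z : (Fin k → Bool) → ℂ) :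
    (Fin k → Bool) → ℂ := fun x =>
  ∑ Y : Fin m → Fin k → Bool,
    (∏ i, z (Y i)) * ∏ e : D.EIdx, D.ZE ℂ lam e Y x / lam ^ D.normY e Y

end GluingData

/-- Index type for the affine chart `{(0,…,0)-coordinate ≠ 0}` of `ℙ^{2^k−1}`. -/
abbrev NZ (k : ℕ) := {x : Fin k → Bool // x ≠ zeroT k}

/-- The affine chart `ℂ^{2^k−1}` of `ℙ^{2^k−1}`. -/
abbrev CS (k : ℕ) := NZ k → ℂ

/-- `e_j` as a chart index. -/
def unitNZ {k : ℕ} (j : Fin k) : NZ k :=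
  ⟨unitT j, fun h => by
    have := congrFun h j
    simp [unitT, zeroT] at this⟩

/-- Extension of a chart point to a vector of homogeneous coordinates with
`(0,…,0)`-coordinate `1`. -/
def extendC {k : ℕ} (u : CS k) : (Fin k → Bool) → ℂ :=
  fun x => if h : x = zeroT k then 1 else u ⟨x, h⟩

/-- The invariant manifold `M_e` in the chart: `[x] = ∏_{j : x_j = 1} [e_j]`. -/
def MeC (k : ℕ) : Set (CS k) :=
  {u | ∀ x : NZ k, u x = ∏ j ∈ Finset.univ.filter (fun j => x.1 j = true), u (unitNZ j)}

/-- The rational map `F̂` on `ℙ^{2^k−1}` induced by `F`, written in the chart. -/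
def GluingData.Fc {m k : ℕ} (D : GluingData m k) (lam : ℂ) (u : CS k) : CS k := fun x =>
  D.Fmap lam (extendC u) x.1 / D.Fmap lam (extendC u) (zeroT k)

/-- An independent set in a simple graph. -/
def SimpleGraph.IsIndepSet' {V : Type} (G : SimpleGraph V) (s : Set V) : Prop :=
  s.Pairwise fun a b => ¬G.Adj a b

/-- The independence polynomial of a finite simple graph. -/
def indepPoly {V : Type} [Fintype V] [DecidableEq V] (G : SimpleGraph V) : Polynomial ℂ :=
  ∑ I : Finset V, if G.IsIndepSet' (↑I : Set V) then Polynomial.X ^ I.card else 0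

/-!
The coefficient of `F(z)_x` at an assignment `Y` is a product over edges `e` of a weight that sees
`Y` only through the labels `ℓ(e)` on the copies in `e`. For a set `J` of labels, exchanging these
values between `Y` and `Y'` along all edges `Φ(j)`, `j ∈ J`, therefore exchanges the `J`-entries of
`x` and `x'` in the coefficients of `F(z)_x F(z)_{x'}`. Do this for `∅`, `J`, `Jᶜ` and all labels.
Since the sets `Φ(j)` are disjoint, the exchanges for `J` and for `Jᶜ` affect disjoint sets of
copies, so the alternating sum of the four expansions factors: twice the difference of
`F(z)_x F(z)_{x'}` and its `J`-exchanged version is a sum of terms containing a product of two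
differences, one for the copies touched by `J` and one for the others. Exchanging entries does not
change `z_y z_{y'}` on `M_e`, so each of the two differences is of the order of the defect of `z`,
and their product is of the order of its square.
-/

section Asymptotics

open Asymptotics

variable {α ι 𝕜 : Type*} [NormedField 𝕜] {l : Filter α} {g : α → ℝ}

lemma isBigO_mul_sub_mul {a b c d : α → 𝕜} (hb : b =O[l] fun _ => (1 : ℝ))
    (hc : c =O[l] fun _ => (1 : ℝ)) (hac : (fun ξ => a ξ - c ξ) =O[l] g)
    (hbd : (fun ξ => b ξ - d ξ) =O[l] g) :
    (fun ξ => a ξ * b ξ - c ξ * d ξ) =O[l] g := by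
  have hleft : (fun ξ => (a ξ - c ξ) * b ξ) =O[l] g := by simpa using hac.mul hb
  have hright : (fun ξ => c ξ * (b ξ - d ξ)) =O[l] g := by simpa using hc.mul hbd
  exact (hleft.add hright).congr_left fun ξ => by ring

lemma isBigO_prod_sub_prod {a c : ι → α → 𝕜}
    (ha : ∀ i, a i =O[l] fun _ => (1 : ℝ)) (hc : ∀ i, c i =O[l] fun _ => (1 : ℝ))
    (hac : ∀ i, (fun ξ => a i ξ - c i ξ) =O[l] g) (s : Finset ι) :
    (fun ξ => ∏ i ∈ s, a i ξ - ∏ i ∈ s, c i ξ) =O[l] g := by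
  induction s using Finset.induction_on with
  | empty => simpa using isBigO_zero g l
  | insert i s hi ih =>
    have hbdd : (fun ξ => ∏ i ∈ s, a i ξ) =O[l] fun _ => (1 : ℝ) := by
      simpa using IsBigO.finsetProd (g := fun _ _ => (1 : ℝ)) fun i _ => ha i
    simpa only [Finset.prod_insert hi] using isBigO_mul_sub_mul hbdd (hc i) (hac i) ih

lemma isBigO_sub_prod_of_insert [DecidableEq ι] {f : Finset ι → α → 𝕜}
    (hempty : f ∅ =ᶠ[l] fun _ => 1) (hbdd : ∀ j, f {j} =O[l] fun _ => (1 : ℝ))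
    (hinsert : ∀ j s, j ∉ s → (fun ξ => f (insert j s) ξ - f {j} ξ * f s ξ) =O[l] g)
    (s : Finset ι) : (fun ξ => f s ξ - ∏ j ∈ s, f {j} ξ) =O[l] g := by
  induction s using Finset.induction_on with
  | empty =>
    refine (isBigO_zero g l).congr' ?_ EventuallyEq.rfl
    filter_upwards [hempty] with ξ hξ
    rw [hξ, Finset.prod_empty, sub_self]
  | insert j s hj ih =>
    have hmul : (fun ξ => f {j} ξ * (f s ξ - ∏ j ∈ s, f {j} ξ)) =O[l] g := by
      simpa using (hbdd j).mul ih
    refine ((hinsert j s hj).add hmul).congr_left fun ξ => ?_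
    rw [Finset.prod_insert hj]
    ring

lemma isBigO_div_sub_div_mul_div {a b c d : α → 𝕜} {d₀ : 𝕜} (hd : Tendsto d l (nhds d₀))
    (hd₀ : d₀ ≠ 0) (h : (fun ξ => a ξ * d ξ - b ξ * c ξ) =O[l] g) :
    (fun ξ => a ξ / d ξ - b ξ / d ξ * (c ξ / d ξ)) =O[l] g := by
  have hinv : (fun ξ => (d ξ ^ 2)⁻¹) =O[l] fun _ => (1 : ℝ) :=
    ((hd.pow 2).inv₀ (pow_ne_zero 2 hd₀)).isBigO_one ℝ
  have hmul : (fun ξ => (d ξ ^ 2)⁻¹ * (a ξ * d ξ - b ξ * c ξ)) =O[l] g := by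
    simpa using hinv.mul h
  refine hmul.congr' ?_ EventuallyEq.rfl
  filter_upwards [hd.eventually_ne hd₀] with ξ hξ
  field_simp

end Asymptotics

section BinaryTuples

variable {ι R : Type*} [CommSemiring R]

/-- The product state `y ↦ ∏_{j : y_j = 1} t_j` with parameters `t`. In the chart, the points of
`M_e` are the product states with `t_j = [e_j]`. -/
def prodState [Fintype ι] (t : ι → R) (y : ι → Bool) : R := ∏ j with y j = true, t j

/-- The product of the values of `z` at the two tuples obtained from `y` and `y'` by exchanging
their entries at the positions in `S`. -/
def exchangeMul [DecidableEq ι] (z : (ι → Bool) → R) (S : Finset ι) (y y' : ι → Bool) : R :=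
  z (S.piecewise y' y) * z (S.piecewise y y')

@[simp]
lemma exchangeMul_empty [DecidableEq ι] (z : (ι → Bool) → R) (y y' : ι → Bool) :
    exchangeMul z ∅ y y' = z y * z y' := by
  simp only [exchangeMul, Finset.piecewise_empty]

lemma exchangeMul_prodState [Fintype ι] [DecidableEq ι] (t : ι → R) (S : Finset ι)
    (y y' : ι → Bool) :
    exchangeMul (prodState t) S y y' = prodState t y * prodState t y' := by
  simp only [exchangeMul, prodState, Finset.prod_filter, ← Finset.prod_mul_distrib]
  refine Finset.prod_congr rfl fun j _ => ?_
  by_cases hj : j ∈ S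
  · simp only [Finset.piecewise_eq_of_mem _ _ _ hj, mul_comm]
  · simp only [Finset.piecewise_eq_of_notMem _ _ _ hj]

/-- The binary tuple whose `1`-entries are exactly at the positions in `s`. -/
def indicatorT {k : ℕ} (s : Finset (Fin k)) : Fin k → Bool := fun j => decide (j ∈ s)

variable {k : ℕ}

lemma prodState_zeroT (t : Fin k → R) : prodState t (zeroT k) = 1 := by
  simp [prodState, zeroT]

lemma indicatorT_empty : indicatorT (∅ : Finset (Fin k)) = zeroT k := by
  simp [indicatorT, zeroT, funext_iff]

lemma indicatorT_singleton (j : Fin k) : indicatorT {j} = unitT j := by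
  simp [indicatorT, unitT, funext_iff]

lemma indicatorT_filter (x : Fin k → Bool) :
    indicatorT (univ.filter fun j => x j = true) = x := by
  simp [indicatorT, funext_iff]

lemma piecewise_indicatorT_zeroT (J s : Finset (Fin k)) :
    J.piecewise (indicatorT s) (zeroT k) = indicatorT (s ∩ J) := by
  ext j
  by_cases hj : j ∈ J <;> simp [indicatorT, zeroT, hj]

lemma piecewise_zeroT_indicatorT (J s : Finset (Fin k)) :
    J.piecewise (zeroT k) (indicatorT s) = indicatorT (s \ J) := by
  ext j
  by_cases hj : j ∈ J <;> simp [indicatorT, zeroT, hj]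

end BinaryTuples

namespace GluingData

variable {m k : ℕ} (D : GluingData m k)

section Exchange

/-- The factor `Z_{Σ_e}(λ, Y|_e, x|_e) / λ^{‖Y|_e‖}` contributed by the edge `e` to a coefficient
of `F`. -/
def edgeWeight (lam : ℂ) (e : D.EIdx) (Y : Fin m → Fin k → Bool) (x : Fin k → Bool) : ℂ :=
  D.ZE ℂ lam e Y x / lam ^ D.normY e Y

/-- The labels `Λ(j)`, `j ∈ J`, at which the copy `i` is attached to the edge `Φ(j)`. -/
def exchangedLabels (J : Finset (Fin k)) (i : Fin m) : Finset (Fin k) :=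
  (J.filter fun j => i ∈ D.edge (D.Phi j)).image D.Lam

/-- The assignment `Y` with its values along the edges `Φ(j)`, `j ∈ J`, replaced by those of
`Y'`. -/
def exchange (J : Finset (Fin k)) (Y Y' : Fin m → Fin k → Bool) : Fin m → Fin k → Bool :=
  fun i => (D.exchangedLabels J i).piecewise (Y' i) (Y i)

variable {D}

lemma edgeWeight_congr {lam : ℂ} {e : D.EIdx} {Y Y' : Fin m → Fin k → Bool} {x x' : Fin k → Bool}
    (hY : ∀ i ∈ D.edge e, Y i (D.label e) = Y' i (D.label e))
    (hx : ∀ j, D.Phi j = e → x j = x' j) :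
    D.edgeWeight lam e Y x = D.edgeWeight lam e Y' x' := by
  have hnorm : D.normY e Y = D.normY e Y' :=
    congrArg Finset.card (Finset.filter_congr fun i hi => by rw [hY i hi])
  have hZ : D.ZE ℂ lam e Y x = D.ZE ℂ lam e Y' x' := by
    refine Finset.sum_congr rfl fun σ _ => if_congr ?_ rfl rfl
    refine and_congr_right' (and_congr ?_ ?_)
    · exact forall₂_congr fun i hi => by rw [hY i hi]
    · exact forall₂_congr fun j hj => by rw [hx j hj]
  rw [edgeWeight, edgeWeight, hnorm, hZ]

lemma label_mem_exchangedLabels_iff {J : Finset (Fin k)} {e : D.EIdx} {i : Fin m}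
    (hi : i ∈ D.edge e) : D.label e ∈ D.exchangedLabels J i ↔ e ∈ J.image D.Phi := by
  simp only [exchangedLabels, Lam, Finset.mem_image, Finset.mem_filter]
  constructor
  · rintro ⟨j, ⟨hj, hij⟩, hlabel⟩
    exact ⟨j, hj, (D.mem_unique (D.label e) i).unique ⟨hlabel, hij⟩ ⟨rfl, hi⟩⟩
  · rintro ⟨j, hj, rfl⟩
    exact ⟨j, ⟨hj, hi⟩, rfl⟩

lemma edgeWeight_exchange_of_mem (lam : ℂ) {J : Finset (Fin k)} {e : D.EIdx}
    (he : e ∈ J.image D.Phi) (Y Y' : Fin m → Fin k → Bool) (x x' : Fin k → Bool) :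
    D.edgeWeight lam e (D.exchange J Y Y') (J.piecewise x' x) = D.edgeWeight lam e Y' x' := by
  refine edgeWeight_congr (fun i hi => ?_) fun j hj => ?_
  · exact Finset.piecewise_eq_of_mem _ _ _ ((label_mem_exchangedLabels_iff hi).2 he)
  · subst hj
    exact Finset.piecewise_eq_of_mem _ _ _ ((D.Phi_inj.mem_finset_image).1 he)

lemma edgeWeight_exchange_of_notMem (lam : ℂ) {J : Finset (Fin k)} {e : D.EIdx}
    (he : e ∉ J.image D.Phi) (Y Y' : Fin m → Fin k → Bool) (x x' : Fin k → Bool) :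
    D.edgeWeight lam e (D.exchange J Y Y') (J.piecewise x' x) = D.edgeWeight lam e Y x := by
  refine edgeWeight_congr (fun i hi => ?_) fun j hj => ?_
  · exact Finset.piecewise_eq_of_notMem _ _ _ (mt (label_mem_exchangedLabels_iff hi).1 he)
  · subst hj
    exact Finset.piecewise_eq_of_notMem _ _ _ (mt (Finset.mem_image_of_mem D.Phi) he)

variable (D)

lemma prod_edgeWeight_exchange (lam : ℂ) (J : Finset (Fin k)) (Y Y' : Fin m → Fin k → Bool)
    (x x' : Fin k → Bool) :
    (∏ e, D.edgeWeight lam e (D.exchange J Y Y') (J.piecewise x' x)) *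
        ∏ e, D.edgeWeight lam e (D.exchange J Y' Y) (J.piecewise x x') =
      (∏ e, D.edgeWeight lam e Y x) * ∏ e, D.edgeWeight lam e Y' x' := by
  simp only [← Finset.prod_mul_distrib]
  refine Finset.prod_congr rfl fun e _ => ?_
  by_cases he : e ∈ J.image D.Phi
  · rw [edgeWeight_exchange_of_mem lam he, edgeWeight_exchange_of_mem lam he, mul_comm]
  · rw [edgeWeight_exchange_of_notMem lam he, edgeWeight_exchange_of_notMem lam he]

lemma involutive_exchange (J : Finset (Fin k)) : Function.Involutive
    fun p : (Fin m → Fin k → Bool) × (Fin m → Fin k → Bool) =>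
      (D.exchange J p.1 p.2, D.exchange J p.2 p.1) := by
  rintro ⟨Y, Y'⟩
  ext i l <;> by_cases hl : l ∈ D.exchangedLabels J i <;> simp [exchange, hl]

lemma exchangeMul_Fmap (lam : ℂ) (z : (Fin k → Bool) → ℂ) (J : Finset (Fin k))
    (x x' : Fin k → Bool) :
    exchangeMul (D.Fmap lam z) J x x' =
      ∑ p : (Fin m → Fin k → Bool) × (Fin m → Fin k → Bool),
        ((∏ e, D.edgeWeight lam e p.1 x) * ∏ e, D.edgeWeight lam e p.2 x') *
          ∏ i, exchangeMul z (D.exchangedLabels J i) (p.1 i) (p.2 i) := by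
  have hFmap (y : Fin k → Bool) :
      D.Fmap lam z y = ∑ Y, (∏ i, z (Y i)) * ∏ e, D.edgeWeight lam e Y y := rfl
  rw [exchangeMul, hFmap, hFmap, Fintype.sum_mul_sum, ← Fintype.sum_prod_type',
    ← Equiv.sum_comp (D.involutive_exchange J).toPerm]
  refine Finset.sum_congr rfl fun p _ => ?_
  rw [← D.prod_edgeWeight_exchange lam J, Function.Involutive.coe_toPerm, mul_mul_mul_comm,
    mul_comm, ← Finset.prod_mul_distrib (f := fun i => z _)]
  rfl

end Exchange

section DisjointImages

variable {D}

lemma exchangedLabels_eq_empty {J : Finset (Fin k)} {i : Fin m}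
    (hi : ∀ j ∈ J, i ∉ D.edge (D.Phi j)) : D.exchangedLabels J i = ∅ := by
  rw [exchangedLabels, Finset.filter_eq_empty_iff.2 hi, Finset.image_empty]

lemma exchangedLabels_eq_exchangedLabels_univ {J : Finset (Fin k)} {i : Fin m}
    (hi : ∀ j ∉ J, i ∉ D.edge (D.Phi j)) : D.exchangedLabels J i = D.exchangedLabels univ i := by
  unfold exchangedLabels
  congr 1
  ext j
  simpa using fun hij => not_imp_not.1 (hi j) hij

lemma prod_exchangedLabels {M : Type*} [CommMonoid M] {J : Finset (Fin k)} {A : Finset (Fin m)}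
    (hA : ∀ j ∈ J, D.edge (D.Phi j) ⊆ A) (hA' : ∀ j ∉ J, D.edge (D.Phi j) ⊆ Aᶜ)
    (h : Fin m → Finset (Fin k) → M) :
    ∏ i, h i (D.exchangedLabels J i) =
      (∏ i ∈ A, h i (D.exchangedLabels univ i)) * ∏ i ∈ Aᶜ, h i ∅ := by
  rw [← Finset.prod_mul_prod_compl A]
  congr 1 <;> refine Finset.prod_congr rfl fun i hi => ?_
  · rw [exchangedLabels_eq_exchangedLabels_univ
      fun j hj hij => Finset.mem_compl.1 (hA' j hj hij) hi]
  · rw [exchangedLabels_eq_empty fun j hj hij => Finset.mem_compl.1 hi (hA j hj hij)]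

lemma exists_edge_subset_and_edge_subset_compl
    (hdisj : ∀ j ℓ : Fin k, j ≠ ℓ → Disjoint (D.edge (D.Phi j)) (D.edge (D.Phi ℓ)))
    (J : Finset (Fin k)) :
    ∃ A, (∀ j ∈ J, D.edge (D.Phi j) ⊆ A) ∧ ∀ j ∉ J, D.edge (D.Phi j) ⊆ Aᶜ := by
  refine ⟨J.biUnion fun j => D.edge (D.Phi j),
    fun j hj => Finset.subset_biUnion_of_mem (fun j => D.edge (D.Phi j)) hj, fun j hj => ?_⟩
  rw [Finset.subset_compl_iff_disjoint_right, Finset.disjoint_biUnion_right]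
  exact fun j' hj' => hdisj j j' (ne_of_mem_of_not_mem hj' hj).symm

lemma two_mul_sub_exchangeMul_Fmap {J : Finset (Fin k)} {A : Finset (Fin m)}
    (hA : ∀ j ∈ J, D.edge (D.Phi j) ⊆ A) (hA' : ∀ j ∉ J, D.edge (D.Phi j) ⊆ Aᶜ)
    (lam : ℂ) (z : (Fin k → Bool) → ℂ) (x x' : Fin k → Bool) :
    2 * (D.Fmap lam z x * D.Fmap lam z x' - exchangeMul (D.Fmap lam z) J x x') =
      ∑ p : (Fin m → Fin k → Bool) × (Fin m → Fin k → Bool),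
        ((∏ e, D.edgeWeight lam e p.1 x) * ∏ e, D.edgeWeight lam e p.2 x') *
          ((∏ i ∈ A, z (p.1 i) * z (p.2 i) -
              ∏ i ∈ A, exchangeMul z (D.exchangedLabels univ i) (p.1 i) (p.2 i)) *
            (∏ i ∈ Aᶜ, z (p.1 i) * z (p.2 i) -
              ∏ i ∈ Aᶜ, exchangeMul z (D.exchangedLabels univ i) (p.1 i) (p.2 i))) := by
  have hsum : 2 * (D.Fmap lam z x * D.Fmap lam z x' - exchangeMul (D.Fmap lam z) J x x') =
      exchangeMul (D.Fmap lam z) ∅ x x' - exchangeMul (D.Fmap lam z) J x x' -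
        exchangeMul (D.Fmap lam z) Jᶜ x x' + exchangeMul (D.Fmap lam z) univ x x' := by
    simp only [exchangeMul, Finset.piecewise_empty, Finset.piecewise_univ, Finset.piecewise_compl]
    ring
  rw [hsum]
  simp only [exchangeMul_Fmap, ← Finset.sum_sub_distrib, ← Finset.sum_add_distrib]
  refine Finset.sum_congr rfl fun p _ => ?_
  let h (i : Fin m) (S : Finset (Fin k)) : ℂ := exchangeMul z S (p.1 i) (p.2 i)
  have hempty : ∏ i, h i (D.exchangedLabels ∅ i) = (∏ i ∈ A, h i ∅) * ∏ i ∈ Aᶜ, h i ∅ :=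
    (Finset.prod_mul_prod_compl A _).symm
  have hJ := prod_exchangedLabels hA hA' h
  have hcompl := prod_exchangedLabels (J := Jᶜ) (A := Aᶜ)
    (fun j hj => hA' j (Finset.mem_compl.1 hj)) (by simpa using hA) h
  have huniv := Finset.prod_mul_prod_compl A fun i => h i (D.exchangedLabels univ i)
  simp only [h, compl_compl, exchangeMul_empty] at hempty hJ hcompl huniv
  rw [hempty, hJ, hcompl, ← huniv]
  ring

end DisjointImages

end GluingData

section Attraction

open Asymptotics Topology

variable {m k : ℕ}

/-- The error with which a chart point satisfies each of the defining equations of `M_e`. -/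
def defect (u : CS k) : CS k := fun x => u x - prodState (fun j => u (unitNZ j)) x.1

lemma extendC_zeroT (u : CS k) : extendC u (zeroT k) = 1 := dif_pos rfl

lemma norm_extendC_sub_prodState_le (u : CS k) (y : Fin k → Bool) :
    ‖extendC u y - prodState (fun j => u (unitNZ j)) y‖ ≤ ‖defect u‖ := by
  by_cases hy : y = zeroT k
  · simp [hy, extendC_zeroT, prodState_zeroT]
  · rw [extendC, dif_neg hy]
    exact norm_le_pi_norm (defect u) ⟨y, hy⟩

lemma continuous_extendC (y : Fin k → Bool) : Continuous fun u : CS k => extendC u y := by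
  unfold extendC
  split_ifs <;> fun_prop

lemma isBigO_one_of_continuous {X : Type*} [TopologicalSpace X] {f : X → ℂ} (hf : Continuous f)
    (x : X) : f =O[𝓝 x] fun _ => (1 : ℝ) :=
  hf.continuousAt.tendsto.isBigO_one ℝ

lemma isBigO_mul_extendC_sub_prodState (ζ : CS k) (y y' : Fin k → Bool) :
    (fun ξ => extendC ξ y * extendC ξ y' -
        prodState (fun j => ξ (unitNZ j)) y * prodState (fun j => ξ (unitNZ j)) y')
      =O[𝓝 ζ] fun ξ => ‖defect ξ‖ := by
  have hsub (y : Fin k → Bool) :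
      (fun ξ => extendC ξ y - prodState (fun j => ξ (unitNZ j)) y) =O[𝓝 ζ] fun ξ => ‖defect ξ‖ :=
    .of_norm_le fun ξ => norm_extendC_sub_prodState_le ξ y
  refine isBigO_mul_sub_mul (isBigO_one_of_continuous (continuous_extendC y') ζ)
    (isBigO_one_of_continuous ?_ ζ) (hsub y) (hsub y')
  unfold prodState
  fun_prop

lemma isBigO_mul_sub_exchangeMul_extendC (ζ : CS k) (S : Finset (Fin k)) (y y' : Fin k → Bool) :
    (fun ξ => extendC ξ y * extendC ξ y' - exchangeMul (extendC ξ) S y y')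
      =O[𝓝 ζ] fun ξ => ‖defect ξ‖ := by
  refine ((isBigO_mul_extendC_sub_prodState ζ y y').sub
    (isBigO_mul_extendC_sub_prodState ζ (S.piecewise y' y) (S.piecewise y y'))).congr_left
      fun ξ => ?_
  rw [← exchangeMul_prodState _ S y y']
  simp only [exchangeMul]
  ring

namespace GluingData

variable (D : GluingData m k)

lemma continuous_Fmap_extendC (lam : ℂ) (x : Fin k → Bool) :
    Continuous fun ξ : CS k => D.Fmap lam (extendC ξ) x :=
  continuous_finsetSum _ fun _ _ =>
    (continuous_finsetProd _ fun _ _ => continuous_extendC _).mul continuous_const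

lemma isBigO_mul_sub_exchangeMul_Fmap
    (hdisj : ∀ j ℓ : Fin k, j ≠ ℓ → Disjoint (D.edge (D.Phi j)) (D.edge (D.Phi ℓ)))
    (lam : ℂ) (ζ : CS k) (J : Finset (Fin k)) (x x' : Fin k → Bool) :
    (fun ξ => D.Fmap lam (extendC ξ) x * D.Fmap lam (extendC ξ) x' -
        exchangeMul (D.Fmap lam (extendC ξ)) J x x')
      =O[𝓝 ζ] fun ξ => ‖defect ξ‖ ^ 2 := by
  have hbdd (S : Finset (Fin k)) (y y' : Fin k → Bool) :
      (fun ξ => exchangeMul (extendC ξ) S y y') =O[𝓝 ζ] fun _ => (1 : ℝ) :=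
    isBigO_one_of_continuous ((continuous_extendC _).mul (continuous_extendC _)) ζ
  have hprod (B : Finset (Fin m)) (Y Y' : Fin m → Fin k → Bool) :
      (fun ξ => ∏ i ∈ B, extendC ξ (Y i) * extendC ξ (Y' i) -
          ∏ i ∈ B, exchangeMul (extendC ξ) (D.exchangedLabels univ i) (Y i) (Y' i))
        =O[𝓝 ζ] fun ξ => ‖defect ξ‖ :=
    isBigO_prod_sub_prod (fun i => by simpa using hbdd ∅ (Y i) (Y' i)) (fun i => hbdd _ _ _)
      (fun i => isBigO_mul_sub_exchangeMul_extendC ζ _ _ _) B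
  obtain ⟨A, hA, hA'⟩ := exists_edge_subset_and_edge_subset_compl hdisj J
  rw [← isBigO_const_mul_left_iff (two_ne_zero (α := ℂ))]
  simp only [two_mul_sub_exchangeMul_Fmap hA hA', pow_two]
  exact IsBigO.fun_sum fun p _ => ((hprod A p.1 p.2).mul (hprod Aᶜ p.1 p.2)).const_mul_left _

lemma isBigO_Fmap_insert
    (hdisj : ∀ j ℓ : Fin k, j ≠ ℓ → Disjoint (D.edge (D.Phi j)) (D.edge (D.Phi ℓ)))
    (lam : ℂ) (ζ : CS k) {j : Fin k} {s : Finset (Fin k)} (hj : j ∉ s) :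
    (fun ξ => D.Fmap lam (extendC ξ) (indicatorT (insert j s)) * D.Fmap lam (extendC ξ) (zeroT k) -
        D.Fmap lam (extendC ξ) (indicatorT {j}) * D.Fmap lam (extendC ξ) (indicatorT s))
      =O[𝓝 ζ] fun ξ => ‖defect ξ‖ ^ 2 := by
  refine (D.isBigO_mul_sub_exchangeMul_Fmap hdisj lam ζ {j} (indicatorT (insert j s))
    (zeroT k)).congr_left fun ξ => ?_
  rw [exchangeMul, piecewise_zeroT_indicatorT, piecewise_indicatorT_zeroT,
    Finset.sdiff_singleton_eq_erase, Finset.erase_insert hj,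
    Finset.inter_singleton_of_mem (Finset.mem_insert_self j s),
    mul_comm (D.Fmap _ _ (indicatorT s))]

theorem isBigO_defect_Fc
    (hdisj : ∀ j ℓ : Fin k, j ≠ ℓ → Disjoint (D.edge (D.Phi j)) (D.edge (D.Phi ℓ)))
    (lam : ℂ) (ζ : CS k) (hdef : D.Fmap lam (extendC ζ) (zeroT k) ≠ 0) :
    (fun ξ => defect (D.Fc lam ξ)) =O[𝓝 ζ] fun ξ => ‖defect ξ‖ ^ 2 := by
  let ratio (s : Finset (Fin k)) (ξ : CS k) : ℂ :=
    D.Fmap lam (extendC ξ) (indicatorT s) / D.Fmap lam (extendC ξ) (zeroT k)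
  have hcont (x : Fin k → Bool) : ContinuousAt (fun ξ => D.Fmap lam (extendC ξ) x) ζ :=
    (D.continuous_Fmap_extendC lam x).continuousAt
  have hempty : ratio ∅ =ᶠ[𝓝 ζ] fun _ => 1 := by
    filter_upwards [(hcont (zeroT k)).eventually_ne hdef] with ξ hξ
    simp only [ratio, indicatorT_empty, div_self hξ]
  have hbdd (j : Fin k) : ratio {j} =O[𝓝 ζ] fun _ => (1 : ℝ) :=
    ((hcont _).div (hcont _) hdef).tendsto.isBigO_one ℝ
  have hinsert (j : Fin k) (s : Finset (Fin k)) (hj : j ∉ s) :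
      (fun ξ => ratio (insert j s) ξ - ratio {j} ξ * ratio s ξ) =O[𝓝 ζ] fun ξ => ‖defect ξ‖ ^ 2 :=
    isBigO_div_sub_div_mul_div (hcont _) hdef (D.isBigO_Fmap_insert hdisj lam ζ hj)
  refine isBigO_pi.2 fun x => ?_
  have hratio := isBigO_sub_prod_of_insert hempty hbdd hinsert (univ.filter fun j => x.1 j = true)
  simp only [ratio, indicatorT_filter, indicatorT_singleton] at hratio
  exact hratio

end GluingData

end Attraction

-- STATEMENT 6
theorem stmt6 {m k : ℕ} (hm : 2 ≤ m) (hk : 2 ≤ k) (D : GluingData m k)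
    (hexp : D.Expanding)
    (hdisj : ∀ j ℓ : Fin k, j ≠ ℓ → Disjoint (D.edge (D.Phi j)) (D.edge (D.Phi ℓ)))
    (lam : ℂ) (hlam : lam ≠ 0)
    (ζ : CS k) (hζ : ζ ∈ MeC k) (hdef : D.Fmap lam (extendC ζ) (zeroT k) ≠ 0) :
    ∃ (U : Set (CS k)) (C ε₀ : ℝ), IsOpen U ∧ ζ ∈ U ∧ 0 < C ∧ 0 < ε₀ ∧
      ∀ ξ ∈ U, ∀ ε : ℝ, 0 < ε → ε ≤ ε₀ →
        (∀ x : NZ k,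
          ‖ξ x - ∏ j ∈ Finset.univ.filter (fun j => x.1 j = true), ξ (unitNZ j)‖ ≤ ε) →
        ∀ x : NZ k,
          ‖(D.Fc lam ξ) x -
              ∏ j ∈ Finset.univ.filter (fun j => x.1 j = true), (D.Fc lam ξ) (unitNZ j)‖ ≤
            C * ε ^ 2 := by
  obtain ⟨C, hC, hattract⟩ := (D.isBigO_defect_Fc hdisj lam ζ hdef).exists_pos
  obtain ⟨U, hU, hUopen, hζU⟩ := eventually_nhds_iff.1 hattract.bound
  refine ⟨U, C, 1, hUopen, hζU, hC, one_pos, fun ξ hξ ε hε _ herror x => ?_⟩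
  have hdefect : ‖defect ξ‖ ≤ ε := (pi_norm_le_iff_of_nonneg hε.le).2 herror
  calc ‖defect (D.Fc lam ξ) x‖ ≤ ‖defect (D.Fc lam ξ)‖ := norm_le_pi_norm _ x
    _ ≤ C * ‖‖defect ξ‖ ^ 2‖ := hU ξ hξ
    _ ≤ C * ε ^ 2 := by
      rw [norm_pow, norm_norm]
      gcongr

end
end

section
/- Let (H, Σ, Υ, Φ) be a stable and expanding gluing data with parameters m, k ≥ 2, let R be the associated graph recursion, and let (G_n)_{n≥0} be the sequence of marked graphs defined by G_{n+1} = R(G_n) starting from a maximally independent graph G_0 with k marked vertices. Then the zeros of the independence polynomials Z_{G_n}(λ) are uniformly bounded: there exists C > 0 such that for every n ≥ 0 and every λ ∈ ℂ with Z_{G_n}(λ) = 0, one has |λ| ≤ C. -/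
open scoped Classical
open Finset Filter

noncomputable section

/-!
The graph `G_n` consists of `m ^ n` copies ("blocks") of `G_0` attached to a skeleton built from the
connecting graphs `Σ_e`. Stability bounds the number of vertices in each connected piece
("connector") of the skeleton, and the number of blocks attached to it, uniformly in `n`. Hence
`Z_{G_n}(λ)` is a sum over independent assignments of the skeleton, weighted by a product over the
connectors, of the product over the blocks of the conditioned partition function `h` of `G_0`.
Maximal independence says that `h = λ ^ d * (1 + O(1 / λ))` with the same exponent `d` for every
boundary condition.

For large `|λ|` one is therefore summing a product of local factors close to `1` against a product
of complex weights `w` with `∑ |w| ≤ K |∑ w|`. As in a cluster expansion, inserting one more factor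
changes the normalized sum by a relative amount of at most `1 / 2`, so the sum never vanishes.
-/

/-! ### Local perturbations of product measures -/

section ProductMean

variable {𝕜 ι B : Type*} {X : ι → Type*}

/-- The mean of `F` against the product of the weights `w c`. The weights are scalars, not
probabilities: in the application they are complex. -/
def productMean [Fintype ι] [∀ c, Fintype (X c)] [CommSemiring 𝕜] (w : ∀ c, X c → 𝕜)
    (F : (∀ c, X c) → 𝕜) : 𝕜 :=
  ∑ ω : ∀ c, X c, (∏ c, w c (ω c)) * F ω

/-- The factors `g b` are perturbations of the constant `1` by at most `ε`, and `g b` only looks at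
the coordinates in `N b`. -/
structure IsLocalPerturbation [NormedRing 𝕜] (N : B → Finset ι) (ε : ℝ)
    (g : B → (∀ c, X c) → 𝕜) : Prop where
  norm_sub_one_le : ∀ b ω, ‖g b ω - 1‖ ≤ ε
  dependsOn : ∀ b, DependsOn (g b) (N b : Set ι)

lemma IsLocalPerturbation.piecewise [NormedRing 𝕜] {N : B → Finset ι} {ε : ℝ}
    {g : B → (∀ c, X c) → 𝕜} (hg : IsLocalPerturbation N ε g) (A : Finset ι) (τ : ∀ c, X c) :
    IsLocalPerturbation N ε fun b ω => g b (A.piecewise τ ω) where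
  norm_sub_one_le b ω := hg.norm_sub_one_le b _
  dependsOn b ω ω' h := hg.dependsOn b fun c hc => by
    by_cases hA : c ∈ A
    · simp only [hA, Finset.piecewise_eq_of_mem]
    · simpa only [hA, not_false_eq_true, Finset.piecewise_eq_of_notMem] using h c hc

lemma prod_update_swap_mul [Fintype ι] [CommSemiring 𝕜] (w : ∀ c, X c → 𝕜) (c : ι) (t : X c)
    (ω : ∀ c, X c) :
    w c (ω c) * ∏ d, w d (Function.update ω c t d) = w c t * ∏ d, w d (ω d) := by
  rw [← Finset.mul_prod_erase univ (fun d => w d (ω d)) (Finset.mem_univ c),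
    ← Finset.mul_prod_erase univ (fun d => w d (Function.update ω c t d)) (Finset.mem_univ c),
    Function.update_self, mul_left_comm]
  congr 2
  exact Finset.prod_congr rfl fun d hd => by
    rw [Function.update_of_ne (Finset.ne_of_mem_erase hd)]

section Increment

variable {E : Type*} [SeminormedAddCommGroup E] {Z Z' : Finset B → E} {R T : Finset B}

lemma norm_union_bounds_of_insert (hRT : Disjoint R T)
    (hZ : ∀ S b, b ∉ S → insert b S ⊆ R ∪ T → ‖Z (insert b S) - Z S‖ ≤ ‖Z S‖ / 2) :
    ‖Z (R ∪ T)‖ ≤ (3 / 2) ^ #T * ‖Z R‖ ∧ ‖Z R‖ ≤ 2 ^ #T * ‖Z (R ∪ T)‖ := by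
  induction T using Finset.induction_on with
  | empty => simp
  | insert b T hb ih =>
    rw [Finset.disjoint_insert_right] at hRT
    rw [Finset.union_insert] at hZ ⊢
    obtain ⟨hupper, hlower⟩ := ih hRT.2 fun S c hc hS =>
      hZ S c hc (hS.trans (Finset.subset_insert _ _))
    have hstep := hZ (R ∪ T) b (by simp [hb, hRT.1]) subset_rfl
    have hup : ‖Z (insert b (R ∪ T))‖ ≤ 3 / 2 * ‖Z (R ∪ T)‖ := by
      linarith [norm_le_norm_add_norm_sub' (Z (insert b (R ∪ T))) (Z (R ∪ T))]
    have hlow : ‖Z (R ∪ T)‖ ≤ 2 * ‖Z (insert b (R ∪ T))‖ := by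
      linarith [norm_le_norm_add_norm_sub (Z (insert b (R ∪ T))) (Z (R ∪ T))]
    rw [Finset.card_insert_of_notMem hb, pow_succ', pow_succ, mul_assoc, mul_assoc]
    exact ⟨hup.trans (by gcongr), hlower.trans (by gcongr)⟩

lemma norm_union_le_three_pow_mul_of_eq (hRT : Disjoint R T)
    (hZ : ∀ S b, b ∉ S → insert b S ⊆ R ∪ T → ‖Z (insert b S) - Z S‖ ≤ ‖Z S‖ / 2)
    (hZ' : ∀ S b, b ∉ S → insert b S ⊆ R ∪ T → ‖Z' (insert b S) - Z' S‖ ≤ ‖Z' S‖ / 2)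
    (hR : Z' R = Z R) : ‖Z' (R ∪ T)‖ ≤ 3 ^ #T * ‖Z (R ∪ T)‖ :=
  calc ‖Z' (R ∪ T)‖ ≤ (3 / 2) ^ #T * ‖Z R‖ := hR ▸ (norm_union_bounds_of_insert hRT hZ').1
    _ ≤ (3 / 2) ^ #T * (2 ^ #T * ‖Z (R ∪ T)‖) :=
        mul_le_mul_of_nonneg_left (norm_union_bounds_of_insert hRT hZ).2 (by positivity)
    _ = 3 ^ #T * ‖Z (R ∪ T)‖ := by rw [← mul_assoc, ← mul_pow]; norm_num

end Increment

lemma card_filter_not_disjoint_le [Fintype B] {N : B → Finset ι} {Δ : ℕ}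
    (hN : ∀ c, #{b | c ∈ N b} ≤ Δ) (A : Finset ι) : #{b | ¬Disjoint (N b) A} ≤ #A * Δ :=
  calc #{b | ¬Disjoint (N b) A} ≤ #(A.biUnion fun c => {b | c ∈ N b}) :=
        Finset.card_le_card fun b => by
          simpa [Finset.not_disjoint_iff] using fun c hc hA => ⟨c, hA, hc⟩
    _ ≤ #A * Δ := Finset.card_biUnion_le_card_mul _ _ _ fun c _ => hN c

section Finite

variable [Fintype ι] [∀ c, Fintype (X c)]

lemma productMean_const_mul [CommSemiring 𝕜] (w : ∀ c, X c → 𝕜) (a : 𝕜) (F : (∀ c, X c) → 𝕜) :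
    productMean w (fun ω => a * F ω) = a * productMean w F := by
  simp only [productMean, Finset.mul_sum, mul_left_comm]

lemma productMean_one [CommSemiring 𝕜] {w : ∀ c, X c → 𝕜} (hw : ∀ c, ∑ t, w c t = 1) :
    productMean w (fun _ => 1) = 1 := by
  simp only [productMean, mul_one, ← Fintype.prod_sum, hw, Finset.prod_const_one]

lemma sum_mul_productMean_update [CommSemiring 𝕜] {w : ∀ c, X c → 𝕜} {c : ι}
    (hw : ∑ t, w c t = 1) (F : (∀ c, X c) → 𝕜) :
    ∑ t, w c t * productMean w (fun ω => F (Function.update ω c t)) = productMean w F := by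
  have hswap : Function.Involutive fun p : X c × (∀ c, X c) =>
      (p.2 c, Function.update p.2 c p.1) := fun p => by simp
  calc ∑ t, w c t * productMean w (fun ω => F (Function.update ω c t))
      = ∑ p : X c × (∀ c, X c),
          w c p.1 * (∏ d, w d (p.2 d)) * F (Function.update p.2 c p.1) := by
        simp only [productMean, Finset.mul_sum, Fintype.sum_prod_type, mul_assoc]
    _ = ∑ p : X c × (∀ c, X c), w c p.1 * (∏ d, w d (p.2 d)) * F p.2 :=
        Fintype.sum_equiv hswap.toPerm _ _ fun p => by
          simp only [Function.Involutive.coe_toPerm, prod_update_swap_mul]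
    _ = productMean w F := by
        simp only [Fintype.sum_prod_type, mul_assoc, ← Finset.mul_sum, ← Finset.sum_mul, hw,
          one_mul, productMean]

lemma norm_productMean_le_of_update [NormedCommRing 𝕜] {w : ∀ c, X c → 𝕜} {c : ι} {K M : ℝ}
    (hw : ∑ t, w c t = 1) (hK : ∑ t, ‖w c t‖ ≤ K) (hM : 0 ≤ M) {F : (∀ c, X c) → 𝕜}
    (hF : ∀ t, ‖productMean w fun ω => F (Function.update ω c t)‖ ≤ M) :
    ‖productMean w F‖ ≤ K * M :=
  calc ‖productMean w F‖
      = ‖∑ t, w c t * productMean w (fun ω => F (Function.update ω c t))‖ := by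
        rw [sum_mul_productMean_update hw]
    _ ≤ ∑ t, ‖w c t‖ * M := norm_sum_le_of_le _ fun t _ =>
        (norm_mul_le _ _).trans (mul_le_mul_of_nonneg_left (hF t) (norm_nonneg _))
    _ ≤ K * M := by
        rw [← Finset.sum_mul]
        exact mul_le_mul_of_nonneg_right hK hM

lemma norm_productMean_le_of_piecewise [NormedCommRing 𝕜] {w : ∀ c, X c → 𝕜} {K M : ℝ}
    (hw : ∀ c, ∑ t, w c t = 1) (hK : ∀ c, ∑ t, ‖w c t‖ ≤ K) (hK0 : 0 ≤ K) (hM : 0 ≤ M)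
    (A : Finset ι) {F : (∀ c, X c) → 𝕜}
    (hF : ∀ τ, ‖productMean w fun ω => F (A.piecewise τ ω)‖ ≤ M) :
    ‖productMean w F‖ ≤ K ^ #A * M := by
  induction A using Finset.induction_on generalizing F with
  | empty =>
    rcases isEmpty_or_nonempty (∀ c, X c) with h | ⟨⟨τ⟩⟩
    · simpa [productMean] using hM
    · simpa using hF τ
  | insert c A hc ih =>
    rw [Finset.card_insert_of_notMem hc, pow_succ', mul_assoc]
    refine norm_productMean_le_of_update (hw c) (hK c) (mul_nonneg (pow_nonneg hK0 _) hM)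
      fun t => ih fun τ => ?_
    simpa only [Finset.piecewise_insert, Function.update_self, Finset.update_piecewise,
      Function.update_idem] using hF (Function.update τ c t)

/-- The mean of the product of the factors `g b` with `b ∈ S`. -/
def perturbedMean [CommSemiring 𝕜] (w : ∀ c, X c → 𝕜) (g : B → (∀ c, X c) → 𝕜) (S : Finset B) : 𝕜 :=
  productMean w fun ω => ∏ b ∈ S, g b ω

lemma perturbedMean_insert_sub [CommRing 𝕜] (w : ∀ c, X c → 𝕜) (g : B → (∀ c, X c) → 𝕜)
    {S : Finset B} {b : B} (hb : b ∉ S) :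
    perturbedMean w g (insert b S) - perturbedMean w g S =
      productMean w fun ω => (g b ω - 1) * ∏ b' ∈ S, g b' ω := by
  simp only [perturbedMean, productMean, Finset.prod_insert hb, ← Finset.sum_sub_distrib]
  exact Finset.sum_congr rfl fun ω _ => by ring

section Perturbation

variable [NormedField 𝕜] {w : ∀ c, X c → 𝕜} {N : B → Finset ι} {ε K : ℝ}
  {g : B → (∀ c, X c) → 𝕜}

lemma IsLocalPerturbation.perturbedMean_piecewise (hg : IsLocalPerturbation N ε g)
    {A : Finset ι} {R : Finset B} (hR : ∀ b ∈ R, Disjoint (N b) A) (τ : ∀ c, X c) :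
    perturbedMean w (fun b ω => g b (A.piecewise τ ω)) R = perturbedMean w g R :=
  congrArg (productMean w) <| funext fun _ => Finset.prod_congr rfl fun b hb =>
    hg.dependsOn b fun _ hc =>
      Finset.piecewise_eq_of_notMem _ _ _ (Finset.disjoint_left.mp (hR b hb) hc)

lemma IsLocalPerturbation.norm_perturbedMean_insert_sub_le_of_piecewise
    (hg : IsLocalPerturbation N ε g) (hw : ∀ c, ∑ t, w c t = 1) (hK : ∀ c, ∑ t, ‖w c t‖ ≤ K)
    (hK0 : 0 ≤ K) {S : Finset B} {b : B} (hb : b ∉ S) {M : ℝ} (hM : 0 ≤ ε * M)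
    (hS : ∀ τ, ‖perturbedMean w (fun b' ω => g b' ((N b).piecewise τ ω)) S‖ ≤ M) :
    ‖perturbedMean w g (insert b S) - perturbedMean w g S‖ ≤ K ^ #(N b) * (ε * M) := by
  rw [perturbedMean_insert_sub w g hb]
  refine norm_productMean_le_of_piecewise hw hK hK0 hM (N b) fun τ => ?_
  have hfrozen : ∀ ω, g b ((N b).piecewise τ ω) = g b τ := fun ω =>
    hg.dependsOn b fun _ hc => Finset.piecewise_eq_of_mem _ _ _ hc
  simp only [hfrozen, productMean_const_mul, norm_mul]
  exact mul_le_mul (hg.norm_sub_one_le b τ) (hS τ) (norm_nonneg _)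
    ((norm_nonneg _).trans (hg.norm_sub_one_le b τ))

variable [Fintype B] {r Δ : ℕ}

/- Freezing the coordinates seen by `g b` costs a factor `K ^ r`. The frozen mean is compared with
the original one through the factors whose neighborhoods avoid `N b`, which freezing does not
change; at most `r * Δ` factors have to be removed and put back, each costing a bounded ratio by
induction. -/
theorem IsLocalPerturbation.norm_perturbedMean_insert_sub_le (hg : IsLocalPerturbation N ε g)
    (hw : ∀ c, ∑ t, w c t = 1) (hK : ∀ c, ∑ t, ‖w c t‖ ≤ K) (hK1 : 1 ≤ K)
    (hr : ∀ b, #(N b) ≤ r) (hΔ : ∀ c, #{b | c ∈ N b} ≤ Δ)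
    (hε : 0 ≤ ε) (hsmall : K ^ r * (ε * 3 ^ (r * Δ)) ≤ 1 / 2) {S : Finset B} {b : B} (hb : b ∉ S) :
    ‖perturbedMean w g (insert b S) - perturbedMean w g S‖ ≤ ‖perturbedMean w g S‖ / 2 := by
  induction S using Finset.strongInduction generalizing g b with
  | H S ih =>
  have hfrozen (τ : ∀ c, X c) :
      ‖perturbedMean w (fun b' ω => g b' ((N b).piecewise τ ω)) S‖ ≤
        3 ^ (r * Δ) * ‖perturbedMean w g S‖ := by
    set far := S.filter fun b' => Disjoint (N b') (N b)
    set near := S.filter fun b' => ¬Disjoint (N b') (N b)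
    have hS : far ∪ near = S := Finset.filter_union_filter_not_eq _ S
    have hincr {h : B → (∀ c, X c) → 𝕜} (hh : IsLocalPerturbation N ε h) (S' : Finset B) (b' : B)
        (hb' : b' ∉ S') (hS' : insert b' S' ⊆ far ∪ near) :
        ‖perturbedMean w h (insert b' S') - perturbedMean w h S'‖ ≤ ‖perturbedMean w h S'‖ / 2 :=
      ih S' ((Finset.ssubset_insert hb').trans_subset (hS'.trans_eq hS)) hh hb'
    have hnear : #near ≤ r * Δ :=
      (Finset.card_le_card (Finset.filter_subset_filter _ (Finset.subset_univ S))).trans <|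
        (card_filter_not_disjoint_le hΔ _).trans (Nat.mul_le_mul_right _ (hr b))
    have hcompare := norm_union_le_three_pow_mul_of_eq (Finset.disjoint_filter_filter_not S S _)
      (hincr hg) (hincr (hg.piecewise (N b) τ))
      (hg.perturbedMean_piecewise (fun b' hb' => (Finset.mem_filter.mp hb').2) τ)
    rw [hS] at hcompare
    exact hcompare.trans (by gcongr; norm_num)
  calc ‖perturbedMean w g (insert b S) - perturbedMean w g S‖
      ≤ K ^ #(N b) * (ε * (3 ^ (r * Δ) * ‖perturbedMean w g S‖)) :=
        hg.norm_perturbedMean_insert_sub_le_of_piecewise hw hK (by positivity) hb (by positivity)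
          hfrozen
    _ ≤ K ^ r * (ε * 3 ^ (r * Δ)) * ‖perturbedMean w g S‖ := by
        rw [mul_assoc, mul_assoc ε]
        gcongr
        exact hr b
    _ ≤ ‖perturbedMean w g S‖ / 2 := by
        linarith [mul_le_mul_of_nonneg_right hsmall (norm_nonneg (perturbedMean w g S))]

theorem IsLocalPerturbation.productMean_prod_ne_zero (hg : IsLocalPerturbation N ε g)
    (hw : ∀ c, ∑ t, w c t ≠ 0) (hK : ∀ c, ∑ t, ‖w c t‖ ≤ K * ‖∑ t, w c t‖) (hK1 : 1 ≤ K)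
    (hr : ∀ b, #(N b) ≤ r) (hΔ : ∀ c, #{b | c ∈ N b} ≤ Δ)
    (hε : 0 ≤ ε) (hsmall : K ^ r * (ε * 3 ^ (r * Δ)) ≤ 1 / 2) :
    productMean w (fun ω => ∏ b, g b ω) ≠ 0 := by
  set u : ∀ c, X c → 𝕜 := fun c t => w c t / ∑ t, w c t
  have hu (c) : ∑ t, u c t = 1 := by rw [← Finset.sum_div, div_self (hw c)]
  have hu' (c) : ∑ t, ‖u c t‖ ≤ K := by
    simpa only [u, norm_div, ← Finset.sum_div, div_le_iff₀ (norm_pos_iff.mpr (hw c))] using hK c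
  have hscale : productMean w (fun ω => ∏ b, g b ω) =
      (∏ c, ∑ t, w c t) * perturbedMean u g univ := by
    have hprod (ω : ∀ c, X c) : ∏ c, w c (ω c) = (∏ c, ∑ t, w c t) * ∏ c, u c (ω c) := by
      rw [← Finset.prod_mul_distrib]
      exact Finset.prod_congr rfl fun c _ => (mul_div_cancel₀ _ (hw c)).symm
    simp only [perturbedMean, productMean, hprod, mul_assoc, Finset.mul_sum]
  have hlower : 1 ≤ 2 ^ #(univ : Finset B) * ‖perturbedMean u g univ‖ := by
    have h := (norm_union_bounds_of_insert (Z := perturbedMean u g)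
      (Finset.disjoint_empty_left univ) fun S b hb _ =>
        hg.norm_perturbedMean_insert_sub_le hu hu' hK1 hr hΔ hε hsmall hb).2
    rwa [Finset.empty_union, perturbedMean, show (fun ω => ∏ b ∈ ∅, g b ω) = fun _ => 1 from rfl,
      productMean_one hu, norm_one] at h
  rw [hscale]
  refine mul_ne_zero (Finset.prod_ne_zero_iff.mpr fun c _ => hw c) fun h => ?_
  rw [h, norm_zero, mul_zero] at hlower
  exact absurd hlower (by norm_num)

end Perturbation

end Finite

end ProductMean

/-! ### Sums of powers of a large parameter -/

section LeadingPower

variable {𝕜 T : Type*} [NormedField 𝕜] {lam : 𝕜} {s : Finset T} {a : T → ℕ} {N : ℕ}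

lemma norm_sum_pow_sub_le (hlam : 1 ≤ ‖lam‖) (ha : ∀ t ∈ s, a t ≤ N) :
    ‖∑ t ∈ s, lam ^ a t - #{t ∈ s | a t = N} * lam ^ N‖ ≤ #s * (‖lam‖ ^ N / ‖lam‖) := by
  have hrest : ∑ t ∈ s, lam ^ a t - #{t ∈ s | a t = N} * lam ^ N =
      ∑ t ∈ s with a t ≠ N, lam ^ a t := by
    rw [← Finset.sum_filter_add_sum_filter_not s (fun t => a t = N),
      Finset.sum_congr rfl fun t ht => by rw [(Finset.mem_filter.mp ht).2], Finset.sum_const,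
      nsmul_eq_mul, add_sub_cancel_left]
  rw [hrest, ← nsmul_eq_mul]
  refine (norm_sum_le_of_le _ fun t ht => ?_).trans <| (Finset.sum_const _).trans_le <|
    nsmul_le_nsmul_left (by positivity) (Finset.card_filter_le _ _)
  obtain ⟨hts, htN⟩ := Finset.mem_filter.mp ht
  rw [norm_pow, le_div_iff₀ (zero_lt_one.trans_le hlam), ← pow_succ]
  exact pow_le_pow_right₀ hlam (lt_of_le_of_ne (ha t hts) htN)

lemma norm_sum_pow_div_sub_one_le (hlam : 1 ≤ ‖lam‖) {t₀ : T} (ht₀ : t₀ ∈ s)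
    (ha : ∀ t ∈ s, t ≠ t₀ → a t < a t₀) :
    ‖(∑ t ∈ s, lam ^ a t) / lam ^ a t₀ - 1‖ ≤ #s / ‖lam‖ := by
  have hpos : 0 < ‖lam‖ := zero_lt_one.trans_le hlam
  have hle : ∀ t ∈ s, a t ≤ a t₀ := fun t ht => by
    by_cases h : t = t₀
    exacts [h ▸ le_rfl, (ha t ht h).le]
  have hunique : {t ∈ s | a t = a t₀} = {t₀} :=
    Finset.eq_singleton_iff_unique_mem.mpr ⟨Finset.mem_filter.mpr ⟨ht₀, rfl⟩, fun t ht =>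
      by_contra fun h => (ha t (Finset.mem_filter.mp ht).1 h).ne (Finset.mem_filter.mp ht).2⟩
  have h := norm_sum_pow_sub_le hlam hle
  rw [hunique, Finset.card_singleton, Nat.cast_one, one_mul] at h
  have hne : lam ^ a t₀ ≠ 0 := pow_ne_zero _ (norm_pos_iff.mp hpos)
  rw [div_sub_one hne, norm_div, norm_pow, div_le_iff₀ (by positivity)]
  exact h.trans_eq (by ring)

lemma sum_norm_pow_le_mul_norm_sum_pow [NormSMulClass ℤ 𝕜] (hlam : 1 ≤ ‖lam‖)
    (hs : 2 * #s ≤ ‖lam‖) :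
    ∑ t ∈ s, ‖lam ^ a t‖ ≤ 2 * #s * ‖∑ t ∈ s, lam ^ a t‖ := by
  rcases s.eq_empty_or_nonempty with rfl | hne
  · simp
  obtain ⟨t₀, ht₀, hmax⟩ := s.exists_max_image a hne
  have hpos : 0 < ‖lam‖ := zero_lt_one.trans_le hlam
  set P := ‖lam‖ ^ a t₀
  have hcount : (1 : ℝ) ≤ #{t ∈ s | a t = a t₀} :=
    Nat.one_le_cast.mpr <| Finset.card_pos.mpr ⟨t₀, Finset.mem_filter.mpr ⟨ht₀, rfl⟩⟩
  have hlead : P ≤ ‖(#{t ∈ s | a t = a t₀} : 𝕜) * lam ^ a t₀‖ := by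
    rw [norm_mul, norm_natCast, norm_pow]
    exact le_mul_of_one_le_left (by positivity) hcount
  have hrest : ‖∑ t ∈ s, lam ^ a t - #{t ∈ s | a t = a t₀} * lam ^ a t₀‖ ≤ P / 2 := by
    refine (norm_sum_pow_sub_le hlam hmax).trans ?_
    rw [mul_div_assoc', div_le_div_iff₀ hpos two_pos]
    nlinarith [show 0 ≤ P by positivity]
  have hhalf : P ≤ 2 * ‖∑ t ∈ s, lam ^ a t‖ := by
    linarith [norm_le_norm_add_norm_sub (∑ t ∈ s, lam ^ a t)
      (#{t ∈ s | a t = a t₀} * lam ^ a t₀)]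
  calc ∑ t ∈ s, ‖lam ^ a t‖ ≤ ∑ _t ∈ s, P := Finset.sum_le_sum fun t ht => by
        rw [norm_pow]
        exact pow_le_pow_right₀ hlam (hmax t ht)
    _ = #s * P := by rw [Finset.sum_const, nsmul_eq_mul]
    _ ≤ #s * (2 * ‖∑ t ∈ s, lam ^ a t‖) := by gcongr
    _ = 2 * #s * ‖∑ t ∈ s, lam ^ a t‖ := by ring

end LeadingPower

/-! ### The hard-core model with bounded components -/

section Fiber

variable {V C Y : Type*}

/-- An assignment on `V` is the same as a family of assignments on the fibers of `κ`. -/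
@[simps]
def fiberGlue (κ : V → C) : (∀ c, {v // κ v = c} → Y) ≃ (V → Y) where
  toFun ω v := ω (κ v) ⟨v, rfl⟩
  invFun σ _ v := σ v
  left_inv ω := by
    funext c ⟨v, hv⟩
    subst hv
    rfl
  right_inv _ := rfl

/-- The extension by `0` of an assignment on the fiber of `κ` over `c`. -/
def fiberExtend (κ : V → C) (c : C) (t : {v // κ v = c} → Bool) (v : V) : Bool :=
  if h : κ v = c then t ⟨v, h⟩ else false

lemma fiberExtend_eq_true_iff {κ : V → C} (ω : ∀ c, {v // κ v = c} → Bool) (c : C) (v : V) :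
    fiberExtend κ c (ω c) v = true ↔ fiberGlue κ ω v = true ∧ κ v = c := by
  rw [fiberExtend]
  split_ifs with h
  · subst h
    simp
  · simp [h]

lemma IsLocalPerturbation.fiberGlue {𝕜 B : Type*} [NormedRing 𝕜] {N : B → Finset V} {ε : ℝ}
    {g : B → (V → Y) → 𝕜} (hg : IsLocalPerturbation N ε g) (κ : V → C) :
    IsLocalPerturbation (fun b => (N b).image κ) ε fun b ω => g b (fiberGlue κ ω) where
  norm_sub_one_le b ω := hg.norm_sub_one_le b _
  dependsOn b ω ω' h := hg.dependsOn b fun v hv => by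
    simp only [fiberGlue_apply, h (κ v) (Finset.mem_image_of_mem κ hv)]

end Fiber

namespace MGraph

variable {C R : Type*} (G : MGraph) {κ : G.V → C}

/-- The weight of a vertex assignment in the independence polynomial: the hard-core model at
activity `lam`. -/
def hardcore [Semiring R] (lam : R) (σ : G.V → Bool) : R :=
  if G.Indep σ then lam ^ G.ones σ else 0

lemma indep_fiberGlue_iff (hκ : ∀ v w, s(v, w) ∈ G.E → κ v = κ w)
    (ω : ∀ c, {v // κ v = c} → Bool) :
    G.Indep (fiberGlue κ ω) ↔ ∀ c, G.Indep (fiberExtend κ c (ω c)) := by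
  simp only [Indep, fiberExtend_eq_true_iff]
  exact ⟨fun h c v w e hvw => h v w e ⟨hvw.1.1, hvw.2.1⟩,
    fun h v w e hvw => h (κ v) v w e ⟨⟨hvw.1, rfl⟩, hvw.2, (hκ v w e).symm⟩⟩

lemma ones_fiberGlue [Fintype C] (ω : ∀ c, {v // κ v = c} → Bool) :
    G.ones (fiberGlue κ ω) = ∑ c, G.ones (fiberExtend κ c (ω c)) := by
  rw [ones, Finset.card_eq_sum_card_fiberwise fun v _ => Finset.mem_univ (κ v)]
  exact Finset.sum_congr rfl fun c _ => by
    simp only [ones, fiberExtend_eq_true_iff, Finset.filter_filter]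

lemma hardcore_fiberGlue [CommSemiring R] [Fintype C] (lam : R)
    (hκ : ∀ v w, s(v, w) ∈ G.E → κ v = κ w) (ω : ∀ c, {v // κ v = c} → Bool) :
    G.hardcore lam (fiberGlue κ ω) = ∏ c, G.hardcore lam (fiberExtend κ c (ω c)) := by
  by_cases h : ∀ c, G.Indep (fiberExtend κ c (ω c))
  · simp only [hardcore, (G.indep_fiberGlue_iff hκ ω).mpr h, h, if_true, Finset.prod_pow_eq_pow_sum,
      ones_fiberGlue]
  · rw [hardcore, if_neg (mt (G.indep_fiberGlue_iff hκ ω).mp h)]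
    obtain ⟨c, hc⟩ := not_forall.mp h
    exact (Finset.prod_eq_zero (Finset.mem_univ c) (if_neg hc)).symm

lemma sum_hardcore_mul [CommSemiring R] [Fintype C] (lam : R)
    (hκ : ∀ v w, s(v, w) ∈ G.E → κ v = κ w) (F : (G.V → Bool) → R) :
    ∑ σ, G.hardcore lam σ * F σ =
      productMean (fun c t => G.hardcore lam (fiberExtend κ c t)) fun ω => F (fiberGlue κ ω) := by
  rw [productMean, ← (fiberGlue κ).sum_comp]
  exact Finset.sum_congr rfl fun ω _ => by rw [hardcore_fiberGlue G lam hκ]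

lemma sum_norm_hardcore_le [NormedField R] [NormSMulClass ℤ R] {T : Type*} [Fintype T] {lam : R}
    (hlam : 1 ≤ ‖lam‖) (hT : 2 * Fintype.card T ≤ ‖lam‖) (f : T → G.V → Bool) :
    ∑ t, ‖G.hardcore lam (f t)‖ ≤ 2 * Fintype.card T * ‖∑ t, G.hardcore lam (f t)‖ := by
  have hcard : (#{t | G.Indep (f t)} : ℝ) ≤ Fintype.card T :=
    Nat.cast_le.mpr (Finset.card_le_univ _)
  simp only [hardcore, apply_ite norm, norm_zero, ← Finset.sum_filter]
  exact (sum_norm_pow_le_mul_norm_sum_pow hlam (by linarith)).trans (by gcongr)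

lemma sum_hardcore_ne_zero [NormedField R] [NormSMulClass ℤ R] {T : Type*} [Fintype T] {lam : R}
    (hlam : 1 ≤ ‖lam‖) (hT : 2 * Fintype.card T ≤ ‖lam‖) {f : T → G.V → Bool} {t : T}
    (ht : G.Indep (f t)) : ∑ t, G.hardcore lam (f t) ≠ 0 := by
  intro h0
  have hle := G.sum_norm_hardcore_le hlam hT f
  rw [h0, norm_zero, mul_zero] at hle
  have hzero : ‖G.hardcore lam (f t)‖ = 0 :=
    (Finset.sum_eq_zero_iff_of_nonneg fun _ _ => norm_nonneg _).mp
      (hle.antisymm (Finset.sum_nonneg fun _ _ => norm_nonneg _)) t (Finset.mem_univ t)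
  rw [hardcore, if_pos ht, norm_eq_zero] at hzero
  exact pow_ne_zero _ (norm_pos_iff.mp (zero_lt_one.trans_le hlam)) hzero

lemma indep_fiberExtend_false (c : C) : G.Indep (fiberExtend κ c fun _ => false) :=
  fun _ _ _ => by simp [fiberExtend]

theorem sum_hardcore_mul_prod_ne_zero [NormedField R] [NormSMulClass ℤ R] [Finite C]
    {B : Type*} [Fintype B] {lam : R} {ε : ℝ} {s r Δ : ℕ} {N : B → Finset G.V}
    {g : B → (G.V → Bool) → R} (hg : IsLocalPerturbation N ε g)
    (hκ : ∀ v w, s(v, w) ∈ G.E → κ v = κ w) (hs : ∀ c, Fintype.card {v // κ v = c} ≤ s)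
    (hr : ∀ b, #(N b) ≤ r) (hΔ : ∀ c, #{b | ∃ v ∈ N b, κ v = c} ≤ Δ)
    (hlam : 2 * 2 ^ s ≤ ‖lam‖) (hε : 0 ≤ ε)
    (hsmall : (2 * 2 ^ s) ^ r * (ε * 3 ^ (r * Δ)) ≤ 1 / 2) :
    ∑ σ, G.hardcore lam σ * ∏ b, g b σ ≠ 0 := by
  cases nonempty_fintype C
  have hcard (c : C) : (Fintype.card ({v // κ v = c} → Bool) : ℝ) ≤ 2 ^ s := by
    rw [Fintype.card_fun, Fintype.card_bool]
    exact_mod_cast Nat.pow_le_pow_right two_pos (hs c)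
  have hK1 : (1 : ℝ) ≤ 2 * 2 ^ s := by linarith [one_le_pow₀ (M₀ := ℝ) one_le_two (n := s)]
  have hT (c : C) : 2 * (Fintype.card ({v // κ v = c} → Bool) : ℝ) ≤ ‖lam‖ :=
    (mul_le_mul_of_nonneg_left (hcard c) two_pos.le).trans hlam
  rw [sum_hardcore_mul G lam hκ]
  refine (hg.fiberGlue κ).productMean_prod_ne_zero
    (fun c => G.sum_hardcore_ne_zero (hK1.trans hlam) (hT c) (G.indep_fiberExtend_false c))
    (fun c => (G.sum_norm_hardcore_le (hK1.trans hlam) (hT c) _).trans ?_) hK1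
    (fun b => Finset.card_image_le.trans (hr b)) (by simpa using hΔ) hε hsmall
  gcongr
  exact hcard c

end MGraph

/-! ### The graph recursion and conditioned independence polynomials -/

namespace MarkedGraph

variable {k : ℕ} {R : Type*} (A : MarkedGraph k)

/-- The independent vertex assignments that agree with `x` on the marked vertices. -/
def admissible (x : Fin k → Bool) : Finset (A.G.V → Bool) :=
  {σ | A.G.Indep σ ∧ ∀ j, σ (A.mark j) = x j}

/-- The number of unmarked vertices assigned `1`. -/
def innerOnes (σ : A.G.V → Bool) : ℕ :=
  #{v : {v // ∀ j, A.mark j ≠ v} | σ v = true}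

variable {A} in
lemma mem_admissible {x : Fin k → Bool} {σ : A.G.V → Bool} :
    σ ∈ A.admissible x ↔ A.G.Indep σ ∧ ∀ j, σ (A.mark j) = x j := by
  simp [admissible]

lemma ones_eq_wt_add_innerOnes (hA : Function.Injective A.mark) (σ : A.G.V → Bool) :
    A.G.ones σ = wt (fun j => σ (A.mark j)) + A.innerOnes σ := by
  simp only [MGraph.ones, wt, innerOnes, Finset.card_filter]
  rw [← Finset.sum_filter_add_sum_filter_not univ fun v => v ∈ univ.image A.mark,
    Finset.filter_univ_mem, Finset.sum_image hA.injOn]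
  congr 1
  exact Finset.sum_subtype _ (by simp) _

variable {A} in
lemma ones_of_mem_admissible (hA : Function.Injective A.mark) {x : Fin k → Bool}
    {σ : A.G.V → Bool} (hσ : σ ∈ A.admissible x) : A.G.ones σ = wt x + A.innerOnes σ := by
  rw [A.ones_eq_wt_add_innerOnes hA, funext (mem_admissible.mp hσ).2]

section CommSemiring

variable [CommSemiring R] (lam : R)

/-- The conditioned independence polynomial `Z_A(λ, x)`, with an additional weight `φ`. -/
def condSum (φ : (A.G.V → Bool) → R) (x : Fin k → Bool) : R :=
  ∑ σ ∈ A.admissible x, lam ^ A.G.ones σ * φ σ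

/-- The variant of `condSum` in which the marked vertices carry no power of `λ`: this is what a copy
of `A` contributes after its marked vertices have been glued to other vertices. -/
def innerSum (φ : (A.G.V → Bool) → R) (x : Fin k → Bool) : R :=
  ∑ σ ∈ A.admissible x, lam ^ A.innerOnes σ * φ σ

lemma condSum_eq_pow_wt_mul_innerSum (hA : Function.Injective A.mark) (φ : (A.G.V → Bool) → R)
    (x : Fin k → Bool) : A.condSum lam φ x = lam ^ wt x * A.innerSum lam φ x := by
  simp only [condSum, innerSum, Finset.mul_sum, ← mul_assoc, ← pow_add]
  refine Finset.sum_congr rfl fun σ hσ => ?_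
  rw [ones_of_mem_admissible hA hσ]

lemma sum_hardcore_mul_eq_sum_condSum (φ : (A.G.V → Bool) → R) :
    ∑ σ, A.G.hardcore lam σ * φ σ = ∑ x, A.condSum lam φ x := by
  rw [← Finset.sum_fiberwise univ fun σ j => σ (A.mark j)]
  refine Finset.sum_congr rfl fun x _ => ?_
  simp only [condSum, admissible, MGraph.hardcore, ite_mul, zero_mul, ← Finset.sum_filter,
    Finset.filter_filter, funext_iff, and_comm]

end CommSemiring

end MarkedGraph

namespace GluingData

variable {m k : ℕ} (D : GluingData m k)

/-- The edge of the gluing scheme labeled `l` that contains `i`. -/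
def edgeOf (l : Fin k) (i : Fin m) : D.EIdx := (D.mem_unique l i).choose

lemma label_edgeOf (l : Fin k) (i : Fin m) : D.label (D.edgeOf l i) = l :=
  (D.mem_unique l i).choose_spec.1.1

lemma mem_edge_edgeOf (l : Fin k) (i : Fin m) : i ∈ D.edge (D.edgeOf l i) :=
  (D.mem_unique l i).choose_spec.1.2

lemma edgeOf_label {e : D.EIdx} {i : Fin m} (h : i ∈ D.edge e) : D.edgeOf (D.label e) i = e :=
  ((D.mem_unique (D.label e) i).choose_spec.2 e ⟨rfl, h⟩).symm

variable (A : MarkedGraph k)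

/-- The vertex of `R(A)` given by a vertex of the `i`-th copy of `A`. -/
def copyVertex (i : Fin m) (v : A.G.V) : (D.RGraph A).G.V := Quot.mk _ (Sum.inl (i, v))

/-- The vertex of `R(A)` given by a vertex of the connecting graph `Σ_e`. -/
def connVertex (e : D.EIdx) (v : (D.Sig e).V) : (D.RGraph A).G.V := Quot.mk _ (Sum.inr ⟨e, v⟩)

lemma RGraph_mark (j : Fin k) :
    (D.RGraph A).mark j = D.connVertex A (D.Phi j) (D.root (D.Phi j)) := rfl

lemma copyVertex_mark (l : Fin k) (i : Fin m) :
    D.copyVertex A i (A.mark l) = D.connVertex A (D.edgeOf l i) (D.att (D.edgeOf l i) i) :=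
  Quot.sound ⟨D.edgeOf l i, i, D.mem_edge_edgeOf l i, by rw [label_edgeOf], rfl⟩

variable {A}

@[elab_as_elim]
lemma vertex_induction {P : (D.RGraph A).G.V → Prop} (copy : ∀ i v, P (D.copyVertex A i v))
    (conn : ∀ e v, P (D.connVertex A e v)) (u : (D.RGraph A).G.V) : P u :=
  Quot.ind (Sum.rec (fun p => copy p.1 p.2) fun p => conn p.1 p.2) u

/-- The function on the vertices of `R(A)` that is `f` on the copies of `A` and `g` on the
connecting graphs. -/
def vertexLift {X : Type*} (f : Fin m → A.G.V → X) (g : ∀ e, (D.Sig e).V → X)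
    (h : ∀ i l, f i (A.mark l) = g (D.edgeOf l i) (D.att (D.edgeOf l i) i)) :
    (D.RGraph A).G.V → X :=
  Quot.lift (Sum.elim (fun p => f p.1 p.2) fun p => g p.1 p.2) (by
    rintro _ _ ⟨e, i, hi, rfl, rfl⟩
    have hglue := h i (D.label e)
    rwa [D.edgeOf_label hi] at hglue)

variable (A)

/-- A vertex of `R(A)` lies in a connecting graph or is an unmarked vertex of a copy of `A`. -/
def vertexEquiv (hA : Function.Injective A.mark) :
    (D.RGraph A).G.V ≃ (Σ e, (D.Sig e).V) ⊕ (Fin m × {v : A.G.V // ∀ j, A.mark j ≠ v}) where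
  toFun := D.vertexLift
    (fun i v => if h : ∃ l, A.mark l = v then
      Sum.inl ⟨D.edgeOf h.choose i, D.att _ i⟩ else Sum.inr (i, ⟨v, not_exists.mp h⟩))
    (fun e v => Sum.inl ⟨e, v⟩) fun i l => by
      have h : ∃ l', A.mark l' = A.mark l := ⟨l, rfl⟩
      rw [dif_pos h, hA h.choose_spec]
  invFun := Sum.elim (fun p => D.connVertex A p.1 p.2) fun p => D.copyVertex A p.1 p.2
  left_inv u := by
    induction u using D.vertex_induction with
    | copy i v =>
      simp only [copyVertex, vertexLift, Sum.elim_inl]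
      split_ifs with h
      · exact (D.copyVertex_mark A h.choose i).symm.trans (by rw [h.choose_spec, copyVertex])
      · rfl
    | conn e v => rfl
  right_inv := by
    rintro (⟨e, v⟩ | ⟨i, v, hv⟩)
    · rfl
    · exact dif_neg (not_exists.mpr hv)

lemma RGraph_ones (hA : Function.Injective A.mark) (σ : (D.RGraph A).G.V → Bool) :
    (D.RGraph A).G.ones σ = (∑ e, (D.Sig e).ones (σ ∘ D.connVertex A e)) +
      ∑ i, A.innerOnes (σ ∘ D.copyVertex A i) := by
  simp only [MGraph.ones, MarkedGraph.innerOnes, Finset.card_filter]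
  rw [← (D.vertexEquiv A hA).symm.sum_comp, Fintype.sum_sum_type, Fintype.sum_sigma,
    Fintype.sum_prod_type]
  rfl

lemma RGraph_edges : (D.RGraph A).G.E =
    (∑ i, A.G.E.map (Sym2.map (D.copyVertex A i))) +
      ∑ e, (D.Sig e).E.map (Sym2.map (D.connVertex A e)) := rfl

lemma mem_RGraph_edges (p : Sym2 (D.RGraph A).G.V) :
    p ∈ (D.RGraph A).G.E ↔ (∃ i, ∃ q ∈ A.G.E, Sym2.map (D.copyVertex A i) q = p) ∨
      ∃ e, ∃ q ∈ (D.Sig e).E, Sym2.map (D.connVertex A e) q = p := by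
  simp only [RGraph_edges, Multiset.mem_add, Multiset.mem_sum, Multiset.mem_map, Finset.mem_univ,
    true_and]

lemma RGraph_edge_rel_iff {P : (D.RGraph A).G.V → (D.RGraph A).G.V → Prop}
    (hP : ∀ v w, P v w → P w v) :
    (∀ v w, s(v, w) ∈ (D.RGraph A).G.E → P v w) ↔
      (∀ i v w, s(v, w) ∈ A.G.E → P (D.copyVertex A i v) (D.copyVertex A i w)) ∧
      ∀ e v w, s(v, w) ∈ (D.Sig e).E → P (D.connVertex A e v) (D.connVertex A e w) := by
  simp only [mem_RGraph_edges, Sym2.exists, Sym2.map_mk, Sym2.eq_iff]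
  constructor
  · exact fun h => ⟨fun i v w hvw => h _ _ (.inl ⟨i, v, w, hvw, .inl ⟨rfl, rfl⟩⟩),
      fun e v w hvw => h _ _ (.inr ⟨e, v, w, hvw, .inl ⟨rfl, rfl⟩⟩)⟩
  · rintro ⟨hcopy, hconn⟩ _ _ (⟨i, v, w, hvw, ⟨rfl, rfl⟩ | ⟨rfl, rfl⟩⟩ |
      ⟨e, v, w, hvw, ⟨rfl, rfl⟩ | ⟨rfl, rfl⟩⟩)
    exacts [hcopy i v w hvw, hP _ _ (hcopy i v w hvw), hconn e v w hvw, hP _ _ (hconn e v w hvw)]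

lemma RGraph_indep_iff (σ : (D.RGraph A).G.V → Bool) :
    (D.RGraph A).G.Indep σ ↔
      (∀ i, A.G.Indep (σ ∘ D.copyVertex A i)) ∧ ∀ e, (D.Sig e).Indep (σ ∘ D.connVertex A e) :=
  D.RGraph_edge_rel_iff A (P := fun v w => ¬(σ v = true ∧ σ w = true)) fun _ _ h h' => h h'.symm

variable {A} in
lemma RGraph_mark_injective (hA : Function.Injective A.mark) :
    Function.Injective (D.RGraph A).mark := fun _ _ hab =>
  D.Phi_inj <| congrArg Sigma.fst <| Sum.inl_injective <|
    congrArg (D.vertexEquiv A hA) hab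

variable {A} in
lemma iterate_RGraph_mark_injective (hA : Function.Injective A.mark) (n : ℕ) :
    Function.Injective (D.RGraph^[n] A).mark := by
  induction n with
  | zero => exact hA
  | succ n ih =>
    rw [Function.iterate_succ_apply']
    exact D.RGraph_mark_injective ih

/-- An assignment on each connecting graph. -/
abbrev ConnAssignment : Type := ∀ e, (D.Sig e).V → Bool

/-- The values of an assignment on the connecting graphs at the marked vertices of the `i`-th
copy. -/
def boundary (ς : D.ConnAssignment) (i : Fin m) (l : Fin k) : Bool :=
  ς (D.edgeOf l i) (D.att (D.edgeOf l i) i)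

/-- The independent assignments on the connecting graphs that agree with `x` at the roots. -/
def connAdmissible (x : Fin k → Bool) : Finset D.ConnAssignment :=
  {ς | (∀ e, (D.Sig e).Indep (ς e)) ∧ ∀ j, ς (D.Phi j) (D.root (D.Phi j)) = x j}

/-- The operator through which the recursion `R` acts on conditioned independence polynomials. -/
def transfer {R : Type*} [CommSemiring R] (lam : R) (w : (Fin k → Bool) → R) (x : Fin k → Bool) :
    R :=
  ∑ ς ∈ D.connAdmissible x, lam ^ (∑ e, (D.Sig e).ones (ς e)) * ∏ i, w (D.boundary ς i)

lemma mem_RGraph_admissible_iff {x : Fin k → Bool} {σ : (D.RGraph A).G.V → Bool} :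
    σ ∈ (D.RGraph A).admissible x ↔ (fun e => σ ∘ D.connVertex A e) ∈ D.connAdmissible x ∧
      ∀ i, σ ∘ D.copyVertex A i ∈ A.admissible (D.boundary (fun e => σ ∘ D.connVertex A e) i) := by
  simp only [MarkedGraph.mem_admissible, RGraph_indep_iff, connAdmissible, Finset.mem_filter_univ,
    RGraph_mark, Function.comp_apply, copyVertex_mark, boundary, implies_true, and_true]
  tauto

theorem condSum_RGraph {R : Type*} [CommSemiring R] (lam : R) (hA : Function.Injective A.mark)
    (φ : (A.G.V → Bool) → R) :
    (D.RGraph A).condSum lam (fun σ => ∏ i, φ (σ ∘ D.copyVertex A i)) =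
      D.transfer lam (A.innerSum lam φ) := by
  funext x
  simp only [MarkedGraph.condSum, transfer, MarkedGraph.innerSum, Finset.prod_univ_sum,
    Finset.mul_sum, Finset.sum_sigma']
  refine Finset.sum_nbij (fun σ => ⟨fun e => σ ∘ D.connVertex A e, fun i => σ ∘ D.copyVertex A i⟩)
    (fun σ hσ => ?_) (fun σ _ σ' _ h => ?_) ?_ (fun σ _ => ?_)
  · simpa only [Finset.mem_sigma, Fintype.mem_piFinset] using (D.mem_RGraph_admissible_iff A).mp hσ
  · obtain ⟨hconn, hcopy⟩ := Sigma.mk.inj h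
    funext u
    induction u using D.vertex_induction with
    | copy i v => exact congrFun (congrFun (eq_of_heq hcopy) i) v
    | conn e v => exact congrFun (congrFun hconn e) v
  · rintro ⟨ς, ρ⟩ h
    obtain ⟨hς, hρ⟩ := Finset.mem_sigma.mp h
    simp only [Fintype.mem_piFinset] at hρ
    exact ⟨D.vertexLift ρ ς fun i => (MarkedGraph.mem_admissible.mp (hρ i)).2,
      (D.mem_RGraph_admissible_iff A).mpr ⟨hς, hρ⟩, rfl⟩
  · rw [D.RGraph_ones A hA, Finset.prod_mul_distrib, Finset.prod_pow_eq_pow_sum, pow_add, mul_assoc]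

end GluingData

/-! ### Skeletons -/

/-- A marked graph with sites prepared for attaching a family of blocks, each of which has `k`
marked vertices: `site b l` is the vertex to which the marked vertex labeled `l` of the block `b`
is glued. -/
structure Skeleton (k : ℕ) extends MarkedGraph k where
  Block : Type
  blockFintype : Fintype Block
  site : Block → Fin k → G.V

attribute [instance] Skeleton.blockFintype

namespace Skeleton

variable {k : ℕ}

/-- The skeleton of a single block, whose marked vertices are the marked vertices of the
skeleton. -/
def single (k : ℕ) : Skeleton k where
  G := { V := Fin k, fin := inferInstance, E := 0 }
  mark := id
  Block := Unit
  blockFintype := inferInstance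
  site _ := id

/-- The product over the blocks of the weight `h` of the assignment at the sites of the block. -/
def blockWeight (K : Skeleton k) {R : Type*} [CommMonoid R] (h : (Fin k → Bool) → R)
    (σ : K.G.V → Bool) : R :=
  ∏ b, h (σ ∘ K.site b)

lemma condSum_single {R : Type*} [CommSemiring R] (lam : R) (h : (Fin k → Bool) → R)
    (x : Fin k → Bool) :
    (single k).condSum lam ((single k).blockWeight h) x = lam ^ wt x * h x := by
  have hadmissible (σ : (single k).G.V → Bool) : σ ∈ (single k).admissible x ↔ σ = x :=
    MarkedGraph.mem_admissible.trans
      ⟨fun h => funext h.2, fun h => ⟨fun _ _ he => absurd he (Multiset.notMem_zero _), congrFun h⟩⟩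
  refine (Finset.sum_eq_single_of_mem x ((hadmissible x).mpr rfl) fun σ hσ hne => ?_).trans ?_
  · exact absurd ((hadmissible σ).mp hσ) hne
  · exact congrArg (lam ^ wt x * ·) (Fintype.prod_unique (ι := Unit) _)

end Skeleton

namespace GluingData

variable {m k : ℕ} (D : GluingData m k) (K : Skeleton k)

/-- The graph recursion on skeletons: `m` copies of `K` are glued and keep all their blocks. -/
def RSkeleton : Skeleton k where
  toMarkedGraph := D.RGraph K.toMarkedGraph
  Block := Fin m × K.Block
  blockFintype := inferInstance
  site p l := D.copyVertex K.toMarkedGraph p.1 (K.site p.2 l)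

lemma blockWeight_RSkeleton {R : Type*} [CommMonoid R] (h : (Fin k → Bool) → R)
    (σ : (D.RSkeleton K).G.V → Bool) :
    (D.RSkeleton K).blockWeight h σ =
      ∏ i, K.blockWeight h (σ ∘ D.copyVertex K.toMarkedGraph i) :=
  Fintype.prod_prod_type _

/-- The skeleton of the `n`-th iterate of the graph recursion: it becomes `R^n(A)` when copies of
`A` are attached as blocks. -/
def skeleton (n : ℕ) : Skeleton k := D.RSkeleton^[n] (Skeleton.single k)

lemma skeleton_succ (n : ℕ) : D.skeleton (n + 1) = D.RSkeleton (D.skeleton n) :=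
  Function.iterate_succ_apply' _ _ _

lemma skeleton_mark_injective (n : ℕ) : Function.Injective (D.skeleton n).mark := by
  induction n with
  | zero => exact Function.injective_id
  | succ n ih =>
    rw [skeleton_succ]
    exact D.RGraph_mark_injective ih

variable {R : Type*} [CommRing R] [IsDomain R] {lam : R} {A : MarkedGraph k}

theorem condSum_iterate_RGraph (hlam : lam ≠ 0) (hA : Function.Injective A.mark) (n : ℕ) :
    (D.RGraph^[n] A).condSum lam (fun _ => 1) =
      (D.skeleton n).condSum lam ((D.skeleton n).blockWeight (A.innerSum lam fun _ => 1)) := by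
  induction n with
  | zero =>
    funext x
    exact (A.condSum_eq_pow_wt_mul_innerSum lam hA _ x).trans (Skeleton.condSum_single lam _ x).symm
  | succ n ih =>
    have hinner : (D.RGraph^[n] A).innerSum lam (fun _ => 1) =
        (D.skeleton n).innerSum lam ((D.skeleton n).blockWeight (A.innerSum lam fun _ => 1)) := by
      funext x
      have hx := congrFun ih x
      rw [MarkedGraph.condSum_eq_pow_wt_mul_innerSum _ _ (D.iterate_RGraph_mark_injective hA n),
        MarkedGraph.condSum_eq_pow_wt_mul_innerSum _ _ (D.skeleton_mark_injective n)] at hx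
      exact mul_left_cancel₀ (pow_ne_zero _ hlam) hx
    have hR := D.condSum_RGraph _ lam (D.iterate_RGraph_mark_injective hA n) fun _ => 1
    have hS := D.condSum_RGraph _ lam (D.skeleton_mark_injective n)
      ((D.skeleton n).blockWeight (A.innerSum lam fun _ => 1))
    simp only [Finset.prod_const_one, hinner] at hR
    rw [Function.iterate_succ_apply', hR, ← hS, skeleton_succ]
    exact congrArg _ (funext fun σ => (D.blockWeight_RSkeleton _ _ σ).symm)

theorem sum_hardcore_iterate_RGraph (hlam : lam ≠ 0) (hA : Function.Injective A.mark) (n : ℕ) :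
    ∑ σ, (D.RGraph^[n] A).G.hardcore lam σ =
      ∑ σ, (D.skeleton n).G.hardcore lam σ *
        (D.skeleton n).blockWeight (A.innerSum lam fun _ => 1) σ := by
  rw [MarkedGraph.sum_hardcore_mul_eq_sum_condSum, ← D.condSum_iterate_RGraph hlam hA,
    ← MarkedGraph.sum_hardcore_mul_eq_sum_condSum]
  simp only [mul_one]

end GluingData

/-! ### Connectors of skeletons -/

namespace Skeleton

variable {k : ℕ}

/-- The parts of a skeleton: its unmarked vertices and the slots `(b, l)` of its blocks. -/
abbrev Part (K : Skeleton k) : Type := {v : K.G.V // ∀ j, K.mark j ≠ v} ⊕ K.Block × Fin k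

/-- The vertex of a skeleton at which a part sits. -/
def partVertex (K : Skeleton k) : K.Part → K.G.V :=
  Sum.elim Subtype.val fun q => K.site q.1 q.2

/-- A partition of the vertices of a skeleton into unions of connected components, called
connectors, such that no connector contains two marked vertices; `idx v` is the connector
of `v`. -/
structure Connectors (K : Skeleton k) where
  Idx : Type
  finite : Finite Idx
  idx : K.G.V → Idx
  idx_eq_of_edge : ∀ v w, s(v, w) ∈ K.G.E → idx v = idx w
  idx_mark_injective : Function.Injective fun j => idx (K.mark j)

attribute [instance] Connectors.finite

namespace Connectors

variable {K : Skeleton k} (κ : K.Connectors)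

/-- The parts of the skeleton that sit in the connector `c`. -/
def parts (c : κ.Idx) : Finset K.Part := {p | κ.idx (K.partVertex p) = c}

lemma card_idx_fiber_le (c : κ.Idx) : Fintype.card {v // κ.idx v = c} ≤ #(κ.parts c) + 1 := by
  have hmarks : #({j | κ.idx (K.mark j) = c} : Finset (Fin k)) ≤ 1 :=
    Finset.card_le_one.mpr fun i hi j hj => κ.idx_mark_injective <| by
      rw [Finset.mem_filter_univ] at hi hj
      exact hi.trans hj.symm
  have hcover : ({v | κ.idx v = c} : Finset K.G.V) ⊆
      (κ.parts c).image K.partVertex ∪ ({j | κ.idx (K.mark j) = c} : Finset _).image K.mark := by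
    intro v hv
    rw [Finset.mem_filter_univ] at hv
    rw [Finset.mem_union, Finset.mem_image, Finset.mem_image]
    by_cases hmark : ∃ j, K.mark j = v
    · obtain ⟨j, rfl⟩ := hmark
      exact .inr ⟨j, (Finset.mem_filter_univ _).mpr hv, rfl⟩
    · exact .inl ⟨.inl ⟨v, not_exists.mp hmark⟩, (Finset.mem_filter_univ _).mpr hv, rfl⟩
  rw [Fintype.card_subtype]
  calc #({v | κ.idx v = c} : Finset K.G.V)
      ≤ _ := Finset.card_le_card hcover
    _ ≤ _ := Finset.card_union_le _ _
    _ ≤ #(κ.parts c) + 1 :=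
      add_le_add Finset.card_image_le (Finset.card_image_le.trans hmarks)

lemma card_block_filter_le (c : κ.Idx) :
    #({b | ∃ l, κ.idx (K.site b l) = c} : Finset K.Block) ≤ #(κ.parts c) := by
  refine (Finset.card_le_card (t := (κ.parts c).toRight.image Prod.fst) fun b hb => ?_).trans
    (Finset.card_image_le.trans Finset.card_toRight_le)
  obtain ⟨l, hl⟩ := (Finset.mem_filter_univ _).mp hb
  exact Finset.mem_image.mpr
    ⟨(b, l), Finset.mem_toRight.mpr ((Finset.mem_filter_univ _).mpr hl), rfl⟩

/-- The connectors of `Skeleton.single`: each vertex is a connector. -/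
def single (k : ℕ) : (Skeleton.single k).Connectors where
  Idx := Fin k
  finite := inferInstance
  idx := id
  idx_eq_of_edge _ _ h := absurd h (Multiset.notMem_zero _)
  idx_mark_injective := Function.injective_id

lemma card_parts_single_le (c : (single k).Idx) : #((single k).parts c) ≤ 1 := by
  refine Finset.card_le_one.mpr ?_
  rintro (⟨v, hv⟩ | ⟨b, l⟩) hp (⟨w, hw⟩ | ⟨b', l'⟩) hq
  · exact absurd rfl (hv v)
  · exact absurd rfl (hv v)
  · exact absurd rfl (hw w)
  · rw [parts, Finset.mem_filter_univ] at hp hq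
    exact congrArg _ (Prod.ext rfl (hp.trans hq.symm))

end Connectors

end Skeleton

namespace GluingData

variable {m k : ℕ} (D : GluingData m k) {K : Skeleton k} (κ : K.Connectors)

/-- The connector of `R(K)` that contains the connector `c` of the `i`-th copy of `K`: connectors
with a marked vertex are merged into the connecting graph to which that vertex is glued. -/
def glueIdx (i : Fin m) (c : κ.Idx) : (Fin m × κ.Idx) ⊕ D.EIdx :=
  if h : ∃ l, κ.idx (K.mark l) = c then Sum.inr (D.edgeOf h.choose i) else Sum.inl (i, c)

lemma glueIdx_mark (i : Fin m) (l : Fin k) :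
    D.glueIdx κ i (κ.idx (K.mark l)) = Sum.inr (D.edgeOf l i) := by
  have h : ∃ l', κ.idx (K.mark l') = κ.idx (K.mark l) := ⟨l, rfl⟩
  rw [glueIdx, dif_pos h, κ.idx_mark_injective h.choose_spec]

lemma glueIdx_eq_inl {i i' : Fin m} {c c' : κ.Idx} (h : D.glueIdx κ i c = Sum.inl (i', c')) :
    i = i' ∧ c = c' := by
  rw [glueIdx] at h
  split_ifs at h
  exact Prod.ext_iff.mp (Sum.inl_injective h)

lemma glueIdx_eq_inr {i : Fin m} {c : κ.Idx} {e : D.EIdx} (h : D.glueIdx κ i c = Sum.inr e) :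
    i ∈ D.edge e ∧ c = κ.idx (K.mark (D.label e)) := by
  rw [glueIdx] at h
  split_ifs at h with hc
  obtain rfl := Sum.inr_injective h
  rw [label_edgeOf]
  exact ⟨D.mem_edge_edgeOf _ _, hc.choose_spec.symm⟩

/-- The connectors of `R(K)` induced by those of `K`. -/
def RConnectors : (D.RSkeleton K).Connectors where
  Idx := (Fin m × κ.Idx) ⊕ D.EIdx
  finite := inferInstance
  idx := D.vertexLift (fun i v => D.glueIdx κ i (κ.idx v)) (fun e _ => Sum.inr e)
    (D.glueIdx_mark κ)
  idx_eq_of_edge := (D.RGraph_edge_rel_iff _ fun _ _ h => h.symm).mpr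
    ⟨fun i _ _ h => congrArg (D.glueIdx κ i) (κ.idx_eq_of_edge _ _ h), fun _ _ _ _ => rfl⟩
  idx_mark_injective _ _ h := D.Phi_inj (Sum.inr_injective h)

/-- The origin of a part of `R(K)`: a vertex of a connecting graph, or a part of a copy of `K`. -/
def partOrigin (hK : Function.Injective K.mark) :
    (D.RSkeleton K).Part → (Σ e, (D.Sig e).V) ⊕ (Fin m × K.Part) :=
  Sum.elim (fun u => Sum.map id (Prod.map id Sum.inl) (D.vertexEquiv _ hK u.1))
    fun q => Sum.inr (q.1.1, Sum.inr (q.1.2, q.2))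

lemma partOrigin_injective (hK : Function.Injective K.mark) :
    Function.Injective (D.partOrigin hK) := by
  refine Function.Injective.sumElim ?_ ?_ ?_
  · exact (Sum.map_injective.mpr ⟨Function.injective_id,
      Function.injective_id.prodMap Sum.inl_injective⟩).comp
      ((D.vertexEquiv _ hK).injective.comp Subtype.val_injective)
  · rintro ⟨⟨i, b⟩, l⟩ ⟨⟨i', b'⟩, l'⟩ h
    simp only [Sum.inr.injEq, Prod.mk.injEq] at h
    obtain ⟨rfl, rfl, rfl⟩ := h
    rfl
  · intro u q h
    rcases hu : D.vertexEquiv _ hK u.1 with a | a <;> rw [hu] at h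
    · exact Sum.inl_ne_inr h
    · exact Sum.inl_ne_inr (Prod.mk.inj (Sum.inr_injective h)).2

lemma partOrigin_ne_root (hK : Function.Injective K.mark) (p : (D.RSkeleton K).Part) (j : Fin k) :
    D.partOrigin hK p ≠ Sum.inl ⟨D.Phi j, D.root (D.Phi j)⟩ := by
  rcases p with ⟨u, hu⟩ | q
  · intro h
    rw [partOrigin, Sum.elim_inl] at h
    rcases hv : D.vertexEquiv _ hK u with a | a <;> rw [hv] at h
    · obtain rfl : a = ⟨D.Phi j, D.root (D.Phi j)⟩ := Sum.inl_injective h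
      exact hu j ((D.vertexEquiv _ hK).injective hv.symm)
    · exact Sum.inr_ne_inl h
  · exact Sum.inr_ne_inl

lemma RConnectors_idx_partVertex (hK : Function.Injective K.mark) (p : (D.RSkeleton K).Part) :
    (D.RConnectors κ).idx ((D.RSkeleton K).partVertex p) =
      Sum.elim (fun a => Sum.inr a.1) (fun a => D.glueIdx κ a.1 (κ.idx (K.partVertex a.2)))
        (D.partOrigin hK p) := by
  rcases p with ⟨u, hu⟩ | q
  · obtain ⟨a, rfl⟩ := (D.vertexEquiv _ hK).symm.surjective u
    simp only [partOrigin, Sum.elim_inl, Equiv.apply_symm_apply]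
    rcases a with a | a <;> rfl
  · rfl

lemma card_parts_RConnectors_inl_le (hK : Function.Injective K.mark) (i : Fin m) (c : κ.Idx) :
    #((D.RConnectors κ).parts (Sum.inl (i, c))) ≤ #(κ.parts c) := by
  refine (Finset.card_le_card_of_injOn (t := (κ.parts c).map ⟨fun p => Sum.inr (i, p), fun _ _ h =>
    (Prod.mk.inj (Sum.inr_injective h)).2⟩) _ (fun p hp => ?_)
    (D.partOrigin_injective hK).injOn).trans_eq (Finset.card_map _)
  have hp' := (Finset.mem_filter_univ _).mp hp
  rw [D.RConnectors_idx_partVertex κ hK] at hp'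
  rcases hq : D.partOrigin hK p with a | ⟨i', q⟩ <;> rw [hq] at hp'
  · exact absurd hp' Sum.inr_ne_inl
  · obtain ⟨rfl, hc⟩ := D.glueIdx_eq_inl κ hp'
    exact Finset.mem_coe.mpr <| Finset.mem_map.mpr ⟨q, (Finset.mem_filter_univ _).mpr hc, rfl⟩

lemma card_parts_RConnectors_inr_le (hK : Function.Injective K.mark) (e : D.EIdx)
    {W : Finset (D.Sig e).V} (hW : ∀ p v, D.partOrigin hK p = Sum.inl ⟨e, v⟩ → v ∈ W) :
    #((D.RConnectors κ).parts (Sum.inr e)) ≤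
      #W + #(D.edge e) * #(κ.parts (κ.idx (K.mark (D.label e)))) := by
  refine (Finset.card_le_card_of_injOn (t := (W.map (.sigmaMk e)).disjSum
      (D.edge e ×ˢ κ.parts (κ.idx (K.mark (D.label e))))) _ (fun p hp => ?_)
    (D.partOrigin_injective hK).injOn).trans_eq
      (by rw [Finset.card_disjSum, Finset.card_map, Finset.card_product])
  have hp' := (Finset.mem_filter_univ _).mp hp
  rw [D.RConnectors_idx_partVertex κ hK] at hp'
  rcases hq : D.partOrigin hK p with ⟨e', v⟩ | ⟨i, q⟩ <;> rw [hq] at hp'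
  · obtain rfl : e' = e := Sum.inr_injective hp'
    exact Finset.mem_coe.mpr <| Finset.inl_mem_disjSum.mpr <|
      Finset.mem_map_of_mem _ (hW p v hq)
  · obtain ⟨hi, hc⟩ := D.glueIdx_eq_inr κ hp'
    exact Finset.mem_coe.mpr <| Finset.inr_mem_disjSum.mpr <|
      Finset.mem_product.mpr ⟨hi, (Finset.mem_filter_univ _).mpr hc⟩

/-- A bound for the number of parts in each connector of the skeletons `D.skeleton n`, given bounds
`N l` for the connectors of the marked vertices. -/
def partBound (N : Fin k → ℕ) : ℕ :=
  1 + ∑ e, (Fintype.card (D.Sig e).V + #(D.edge e) * N (D.label e))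

theorem exists_connectors_skeleton {N : Fin k → ℕ} (hone : ∀ j, 1 ≤ N j)
    (hN : ∀ j, Fintype.card (D.Sig (D.Phi j)).V - 1 + #(D.edge (D.Phi j)) * N (D.Lam j) ≤ N j)
    (n : ℕ) : ∃ κ : (D.skeleton n).Connectors,
      (∀ j, #(κ.parts (κ.idx ((D.skeleton n).mark j))) ≤ N j) ∧
      ∀ c, #(κ.parts c) ≤ D.partBound N := by
  induction n with
  | zero =>
    exact ⟨.single k, fun j => (Skeleton.Connectors.card_parts_single_le _).trans (hone j),
      fun c => (Skeleton.Connectors.card_parts_single_le c).trans (Nat.le_add_right _ _)⟩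
  | succ n ih =>
    obtain ⟨κ, hmark, hall⟩ := ih
    have hinj := D.skeleton_mark_injective n
    rw [skeleton_succ]
    refine ⟨D.RConnectors κ, fun j => ?_, ?_⟩
    · calc #((D.RConnectors κ).parts (Sum.inr (D.Phi j)))
          ≤ #(univ.erase (D.root (D.Phi j))) +
              #(D.edge (D.Phi j)) * #(κ.parts (κ.idx ((D.skeleton n).mark (D.Lam j)))) :=
            D.card_parts_RConnectors_inr_le κ hinj _ fun p v h =>
              Finset.mem_erase.mpr ⟨fun hv => D.partOrigin_ne_root hinj p j (hv ▸ h),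
                Finset.mem_univ _⟩
        _ ≤ Fintype.card (D.Sig (D.Phi j)).V - 1 + #(D.edge (D.Phi j)) * N (D.Lam j) := by
            rw [Finset.card_erase_of_mem (Finset.mem_univ _), Finset.card_univ]
            gcongr
            exact hmark _
        _ ≤ N j := hN j
    · rintro (⟨i, c⟩ | e)
      · exact (D.card_parts_RConnectors_inl_le κ hinj i c).trans (hall c)
      · calc #((D.RConnectors κ).parts (Sum.inr e))
            ≤ #univ + #(D.edge e) * #(κ.parts (κ.idx ((D.skeleton n).mark (D.label e)))) :=
              D.card_parts_RConnectors_inr_le κ hinj e fun _ _ _ => Finset.mem_univ _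
          _ ≤ Fintype.card (D.Sig e).V + #(D.edge e) * N (D.label e) := by
              rw [Finset.card_univ]
              gcongr
              exact hmark _
          _ ≤ ∑ e, (Fintype.card (D.Sig e).V + #(D.edge e) * N (D.label e)) :=
              Finset.single_le_sum
                (f := fun e => Fintype.card (D.Sig e).V + #(D.edge e) * N (D.label e))
                (fun _ _ => Nat.zero_le _) (Finset.mem_univ e)
          _ ≤ D.partBound N := Nat.le_add_left _ _

end GluingData

section Supersolution

open Function

variable {α : Type*} [Finite α] (f : α → α)

lemma exists_iterate_mem_periodicPts (x : α) : ∃ n, f^[n] x ∈ periodicPts f := by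
  obtain ⟨a, b, hne, hab⟩ := Finite.exists_ne_map_eq_of_infinite fun n : ℕ => f^[n] x
  wlog hlt : a < b generalizing a b
  · exact this b a hne.symm hab.symm (hne.lt_or_gt.resolve_left hlt)
  refine ⟨a, mk_mem_periodicPts (Nat.sub_pos_of_lt hlt) ?_⟩
  rw [IsPeriodicPt, IsFixedPt, ← iterate_add_apply, Nat.sub_add_cancel hlt.le]
  exact hab.symm

lemma exists_height_above_periodicPts : ∃ h : α → ℕ, (∀ x ∈ periodicPts f, h (f x) = h x) ∧
    ∀ x ∉ periodicPts f, h (f x) + 1 = h x := by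
  have hex := exists_iterate_mem_periodicPts f
  refine ⟨fun x => Nat.find (hex x), fun x hx => ?_, fun x hx => ?_⟩
  · exact ((Nat.find_eq_zero (hex (f x))).mpr ((bijOn_periodicPts f).mapsTo hx)).trans
      ((Nat.find_eq_zero (hex x)).mpr hx).symm
  · exact (Nat.find_comp_succ (hex x) (hex (f x)) hx).symm

lemma exists_affine_supersolution {a b : α → ℕ} (ha : ∀ x ∈ periodicPts f, a x = 0)
    (hb : ∀ x ∈ periodicPts f, b x ≤ 1) :
    ∃ N : α → ℕ, (∀ x, 1 ≤ N x) ∧ ∀ x, a x + b x * N (f x) ≤ N x := by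
  cases nonempty_fintype α
  obtain ⟨h, hper, hnot⟩ := exists_height_above_periodicPts f
  set P := 1 + ∑ x, (a x + b x)
  have hP : ∀ n, 1 ≤ P ^ n := fun n => Nat.one_le_pow _ _ (Nat.le_add_right 1 _)
  refine ⟨fun x => P ^ h x, fun x => hP _, fun x => ?_⟩
  change a x + b x * P ^ h (f x) ≤ P ^ h x
  by_cases hx : x ∈ periodicPts f
  · rw [ha x hx, zero_add, hper x hx]
    exact mul_le_of_le_one_left (Nat.zero_le _) (hb x hx)
  · have hab : a x + b x ≤ P :=
      (Finset.single_le_sum (f := fun x => a x + b x) (fun _ _ => Nat.zero_le _)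
        (Finset.mem_univ x)).trans (Nat.le_add_left _ _)
    calc a x + b x * P ^ h (f x) ≤ a x * P ^ h (f x) + b x * P ^ h (f x) := by
          gcongr
          exact Nat.le_mul_of_pos_right _ (hP _)
      _ = (a x + b x) * P ^ h (f x) := (add_mul _ _ _).symm
      _ ≤ P * P ^ h (f x) := by gcongr
      _ = P ^ h x := by rw [← pow_succ', hnot x hx]

end Supersolution

namespace GluingData

variable {m k : ℕ} {D : GluingData m k}

theorem Stable.exists_connectors_skeleton (hD : D.Stable) :
    ∃ S, ∀ n, ∃ κ : (D.skeleton n).Connectors, ∀ c, #(κ.parts c) ≤ S := by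
  obtain ⟨N, hone, hN⟩ := exists_affine_supersolution D.Lam
    (a := fun j => Fintype.card (D.Sig (D.Phi j)).V - 1) (b := fun j => #(D.edge (D.Phi j)))
    (fun j hj => Nat.sub_eq_zero_of_le <| Fintype.card_le_one_iff.mpr (hD.2 j hj).1)
    (fun j hj => Nat.lt_succ_iff.mp <| not_le.mp (hD.1 j hj))
  exact ⟨D.partBound N, fun n => (D.exists_connectors_skeleton hone hN n).imp fun _ h => h.2⟩

end GluingData

/-! ### Maximal independence -/

namespace MarkedGraph

variable {k : ℕ} (A : MarkedGraph k)

lemma mem_admissible_iff_support {x : Fin k → Bool} {σ : A.G.V → Bool} :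
    σ ∈ A.admissible x ↔
      A.G.IndepFinset ({v | σ v = true}) ∧ Agrees A ({v | σ v = true}) x := by
  simp only [mem_admissible, MGraph.IndepFinset, Agrees, Finset.mem_filter_univ]
  exact and_congr ⟨fun h v hv w hw e => h v w e ⟨hv, hw⟩, fun h v w e hvw => h v hvw.1 w hvw.2 e⟩
    (forall_congr' fun _ => Bool.eq_iff_iff)

lemma exists_mem_admissible_of_le (hA : Function.Injective A.mark) {x y : Fin k → Bool}
    (hxy : x ≤ y) {σ : A.G.V → Bool} (hσ : σ ∈ A.admissible y) :
    ∃ τ ∈ A.admissible x, A.innerOnes τ = A.innerOnes σ := by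
  obtain ⟨hindep, hmark⟩ := mem_admissible.mp hσ
  refine ⟨fun v => σ v && decide (∀ j, A.mark j = v → x j = true), mem_admissible.mpr ⟨?_, ?_⟩, ?_⟩
  · simp only [MGraph.Indep, Bool.and_eq_true]
    exact fun v w e h => hindep v w e ⟨h.1.1, h.2.1⟩
  · intro j
    simp only [hA.eq_iff, forall_eq, hmark, Bool.decide_eq_true]
    exact inf_eq_right.mpr (hxy j)
  · refine congrArg Finset.card (Finset.filter_congr fun v _ => ?_)
    simp [v.2]

end MarkedGraph

namespace MaxIndependent

variable {k : ℕ} {A : MarkedGraph k}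

lemma mark_injective (hA : MaxIndependent A) : Function.Injective A.mark := by
  intro i j hij
  obtain ⟨I, ⟨-, hI⟩, -⟩ := hA.1 (unitT i)
  have hj : unitT i j = true := (hI j).mp (hij ▸ (hI i).mpr (if_pos rfl))
  exact (of_decide_eq_true (by simpa [unitT] using hj) : j = i).symm

variable (hA : MaxIndependent A)

/-- The assignment of the maximal independent set `I(x)`. -/
def maxAssignment (x : Fin k → Bool) : A.G.V → Bool := fun v => decide (v ∈ (hA.1 x).choose)

lemma support_maxAssignment (x : Fin k → Bool) :
    ({v | hA.maxAssignment x v = true} : Finset A.G.V) = (hA.1 x).choose := by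
  simp [maxAssignment]

lemma maxAssignment_mem (x : Fin k → Bool) : hA.maxAssignment x ∈ A.admissible x := by
  rw [A.mem_admissible_iff_support, support_maxAssignment]
  exact (hA.1 x).choose_spec.1

lemma ones_maxAssignment (x : Fin k → Bool) :
    A.G.ones (hA.maxAssignment x) = #(hA.1 x).choose :=
  congrArg Finset.card (hA.support_maxAssignment x)

lemma ones_le_ones_maxAssignment {x : Fin k → Bool} {σ : A.G.V → Bool} (hσ : σ ∈ A.admissible x) :
    A.G.ones σ ≤ A.G.ones (hA.maxAssignment x) :=
  ((hA.1 x).choose_spec.2.1 _ (A.mem_admissible_iff_support.mp hσ)).trans_eq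
    (hA.ones_maxAssignment x).symm

lemma eq_maxAssignment_of_ones_eq {x : Fin k → Bool} {σ : A.G.V → Bool} (hσ : σ ∈ A.admissible x)
    (h : A.G.ones σ = A.G.ones (hA.maxAssignment x)) : σ = hA.maxAssignment x := by
  have hsupport := (hA.1 x).choose_spec.2.2 _ (A.mem_admissible_iff_support.mp hσ)
    (h.trans (hA.ones_maxAssignment x))
  funext v
  rw [maxAssignment, ← hsupport]
  simp

lemma ones_maxAssignment_eq_wt_add (x : Fin k → Bool) :
    A.G.ones (hA.maxAssignment x) = wt x + A.innerOnes (hA.maxAssignment x) :=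
  MarkedGraph.ones_of_mem_admissible hA.mark_injective (hA.maxAssignment_mem x)

/-- The number of unmarked vertices in the maximal independent set `I(0)`. -/
def coreSize : ℕ := A.innerOnes (hA.maxAssignment (zeroT k))

lemma antitone_innerOnes_maxAssignment :
    Antitone fun x => A.innerOnes (hA.maxAssignment x) := by
  intro x y hxy
  obtain ⟨τ, hτ, hinner⟩ :=
    A.exists_mem_admissible_of_le hA.mark_injective hxy (hA.maxAssignment_mem y)
  have hle := hA.ones_le_ones_maxAssignment hτ
  rw [MarkedGraph.ones_of_mem_admissible hA.mark_injective hτ,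
    ones_maxAssignment_eq_wt_add, hinner] at hle
  exact Nat.le_of_add_le_add_left hle

lemma innerOnes_maxAssignment_oneT : A.innerOnes (hA.maxAssignment (oneT k)) = hA.coreSize := by
  have hones := hA.2 _ _ ⟨(hA.1 (oneT k)).choose_spec.1, (hA.1 (oneT k)).choose_spec.2.1⟩
    ⟨(hA.1 (zeroT k)).choose_spec.1, (hA.1 (zeroT k)).choose_spec.2.1⟩
  rw [← hA.ones_maxAssignment, ← hA.ones_maxAssignment,
    ones_maxAssignment_eq_wt_add, ones_maxAssignment_eq_wt_add] at hones
  have hwt₁ : wt (oneT k) = k := by simp [wt, oneT]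
  have hwt₀ : wt (zeroT k) = 0 := by simp [wt, zeroT]
  rw [coreSize]
  lia

lemma innerOnes_maxAssignment (x : Fin k → Bool) :
    A.innerOnes (hA.maxAssignment x) = hA.coreSize :=
  (hA.antitone_innerOnes_maxAssignment fun _ => Bool.false_le _).antisymm <|
    hA.innerOnes_maxAssignment_oneT.symm.trans_le
      (hA.antitone_innerOnes_maxAssignment fun _ => Bool.le_true _)

lemma innerOnes_lt_coreSize {x : Fin k → Bool} {σ : A.G.V → Bool} (hσ : σ ∈ A.admissible x)
    (hne : σ ≠ hA.maxAssignment x) : A.innerOnes σ < hA.coreSize := by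
  have hlt := (hA.ones_le_ones_maxAssignment hσ).lt_of_ne
    (mt (hA.eq_maxAssignment_of_ones_eq hσ) hne)
  rw [MarkedGraph.ones_of_mem_admissible hA.mark_injective hσ,
    ones_maxAssignment_eq_wt_add, innerOnes_maxAssignment] at hlt
  exact Nat.lt_of_add_lt_add_left hlt

theorem norm_innerSum_div_sub_one_le {𝕜 : Type*} [NormedField 𝕜] {lam : 𝕜} (hlam : 1 ≤ ‖lam‖)
    (x : Fin k → Bool) :
    ‖A.innerSum lam (fun _ => 1) x / lam ^ hA.coreSize - 1‖ ≤ 2 ^ Fintype.card A.G.V / ‖lam‖ := by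
  have hcard : (#(A.admissible x) : ℝ) ≤ 2 ^ Fintype.card A.G.V := by
    refine (Nat.cast_le.mpr (Finset.card_le_univ _)).trans_eq ?_
    rw [Fintype.card_fun, Fintype.card_bool]
    norm_cast
  have hlead := norm_sum_pow_div_sub_one_le (a := A.innerOnes) hlam (hA.maxAssignment_mem x)
    fun σ hσ hne => (hA.innerOnes_lt_coreSize hσ hne).trans_eq (hA.innerOnes_maxAssignment x).symm
  simp only [MarkedGraph.innerSum, mul_one, ← hA.innerOnes_maxAssignment x]
  exact hlead.trans (by gcongr)

end MaxIndependent

/-! ### Zero-freeness at large activity -/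

namespace Skeleton

variable {k : ℕ} (K : Skeleton k) {𝕜 : Type*} [NormedField 𝕜] {lam : 𝕜}

lemma isLocalPerturbation_site {ε : ℝ} {h : (Fin k → Bool) → 𝕜} (hh : ∀ x, ‖h x - 1‖ ≤ ε) :
    IsLocalPerturbation (fun b => univ.image (K.site b)) ε fun b σ => h (σ ∘ K.site b) where
  norm_sub_one_le _ _ := hh _
  dependsOn _ _ _ hσ := congrArg h <| funext fun l =>
    hσ _ (Finset.mem_coe.mpr (Finset.mem_image_of_mem _ (Finset.mem_univ l)))

theorem sum_hardcore_mul_blockWeight_ne_zero [NormSMulClass ℤ 𝕜] (κ : K.Connectors) {S : ℕ}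
    (hS : ∀ c, #(κ.parts c) ≤ S) {h : (Fin k → Bool) → 𝕜} {a : 𝕜} {ε : ℝ}
    (hh : ∀ x, ‖h x / a - 1‖ ≤ ε) (hlam : 2 * 2 ^ (S + 1) ≤ ‖lam‖)
    (hsmall : (2 * 2 ^ (S + 1)) ^ k * (ε * 3 ^ (k * S)) ≤ 1 / 2) :
    ∑ σ, K.G.hardcore lam σ * K.blockWeight h σ ≠ 0 := by
  have hnormalized : ∑ σ, K.G.hardcore lam σ * ∏ b, h (σ ∘ K.site b) / a ≠ 0 :=
    K.G.sum_hardcore_mul_prod_ne_zero (K.isLocalPerturbation_site hh) κ.idx_eq_of_edge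
      (fun c => (κ.card_idx_fiber_le c).trans (Nat.succ_le_succ (hS c)))
      (fun b => Finset.card_image_le.trans_eq (Finset.card_fin k))
      (fun c => by simpa using (κ.card_block_filter_le c).trans (hS c)) hlam
      ((norm_nonneg _).trans (hh (zeroT k))) hsmall
  intro hzero
  refine hnormalized ?_
  simp only [Finset.prod_div_distrib, Finset.prod_const, mul_div_assoc', ← Finset.sum_div]
  exact div_eq_zero_iff.mpr (.inl hzero)

end Skeleton

theorem stmt8_general {m k : ℕ} (D : GluingData m k) (hstable : D.Stable)
    (G0 : MarkedGraph k) (hmax : MaxIndependent G0) :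
    ∃ C : ℝ, 0 < C ∧ ∀ (n : ℕ) (lam : ℂ),
      Zfull ℂ lam ((D.RGraph)^[n] G0).G = 0 → ‖lam‖ ≤ C := by
  obtain ⟨S, hconnectors⟩ := hstable.exists_connectors_skeleton
  set K : ℝ := 2 * 2 ^ (S + 1)
  set M : ℝ := 2 * (K ^ k * (2 ^ Fintype.card G0.G.V * 3 ^ (k * S)))
  have hK : 1 ≤ K := by linarith [one_le_pow₀ (M₀ := ℝ) one_le_two (n := S + 1)]
  refine ⟨max K M, lt_max_of_lt_left (zero_lt_one.trans_le hK), fun n lam hzero => ?_⟩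
  by_contra! hlam
  obtain ⟨hKlam, hMlam⟩ := max_lt_iff.mp hlam
  have hlam₁ : 1 ≤ ‖lam‖ := hK.trans hKlam.le
  have hlam₀ : lam ≠ 0 := norm_pos_iff.mp (zero_lt_one.trans_le hlam₁)
  obtain ⟨κ, hκ⟩ := hconnectors n
  have hsmall : K ^ k * (2 ^ Fintype.card G0.G.V / ‖lam‖ * 3 ^ (k * S)) ≤ 1 / 2 := by
    rw [div_mul_eq_mul_div, mul_div_assoc', div_le_div_iff₀ (norm_pos_iff.mpr hlam₀) two_pos]
    linarith
  refine (D.skeleton n).sum_hardcore_mul_blockWeight_ne_zero κ hκ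
    (hmax.norm_innerSum_div_sub_one_le hlam₁) hKlam.le hsmall ?_
  exact (D.sum_hardcore_iterate_RGraph hlam₀ hmax.mark_injective n).symm.trans hzero

-- STATEMENT 8
theorem stmt8 {m k : ℕ} (hm : 2 ≤ m) (hk : 2 ≤ k) (D : GluingData m k)
    (hstable : D.Stable) (hexp : D.Expanding)
    (G0 : MarkedGraph k) (hmax : MaxIndependent G0) :
    ∃ C : ℝ, 0 < C ∧ ∀ (n : ℕ) (lam : ℂ),
      Zfull ℂ lam ((D.RGraph)^[n] G0).G = 0 → ‖lam‖ ≤ C :=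
  stmt8_general D hstable G0 hmax

end
end

section
/- Let G be a finite simple graph with k distinct marked vertices v_1,…,v_k. For x ∈ {0,1}^k, say an independent set I of G agrees with x if, for each j, v_j ∈ I iff x_j = 1, and let M(x) denote the maximal cardinality of an independent set agreeing with x (assuming such sets exist). Suppose independent sets agreeing with (1,…,1) exist and M(1,…,1) − M(0,…,0) = k. Then for every x = (x_1,…,x_k) ∈ {0,1}^k, independent sets agreeing with x exist and M(x) − M(0,…,0) = x_1 + ⋯ + x_k. -/
open scoped Classical
open Finset Filter

noncomputable section

/-!
Independence is inherited by subsets. Deleting the marked vertices `v j` with `z j = 1` from an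
independent set agreeing with `y` leaves one agreeing with `y ∧ ¬z`, at the cost of at most
`∑ j, z j` elements. Passing in this way from `(1, …, 1)` to `x` and from `x` to `(0, …, 0)` bounds
`M(1, …, 1) - M(x)` by the number of zeros of `x` and `M(x) - M(0, …, 0)` by its number of ones.
These two bounds add up to `k`, so `M(1, …, 1) - M(0, …, 0) = k` forces equality in both.
-/

lemma isGreatest_image_sup {α β : Type*} [LinearOrder β] [OrderBot β] (f : α → β)
    {s : Finset α} (hs : s.Nonempty) : IsGreatest (f '' s) (s.sup f) := by
  obtain ⟨a, ha, hsup⟩ := exists_mem_eq_sup s hs f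
  exact ⟨⟨a, ha, hsup.symm⟩, isLUB_sup.1⟩

lemma isGreatest_image_sup_filter {α β : Type*} [Fintype α] [LinearOrder β] [OrderBot β]
    (f : α → β) {p : α → Prop} [DecidablePred p] (hp : ∃ a, p a) :
    IsGreatest (f '' {a | p a}) ((univ.filter p).sup f) := by
  have hne : (univ.filter p).Nonempty := by simpa [filter_nonempty_iff] using hp
  simpa using isGreatest_image_sup f hne

lemma card_true_add_card_compl_true {ι : Type*} [Fintype ι] (x : ι → Bool) :
    #{j | x j = true} + #{j | xᶜ j = true} = Fintype.card ι := by
  simpa using card_filter_add_card_filter_not (s := univ) (fun j ↦ x j = true)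

/-- The members of a family `𝓕` of finite sets agreeing with a binary tuple `x`: those that contain
the marked point `v j` iff `x j = 1`. For graphs, `𝓕` is the family of independent sets. -/
def agreeing {V ι : Type*} (𝓕 : Set (Finset V)) (v : ι → V) (x : ι → Bool) : Set (Finset V) :=
  {I | I ∈ 𝓕 ∧ ∀ j, v j ∈ I ↔ x j = true}

section LowerSet

variable {V ι : Type*}

section Marks

variable [DecidableEq V] [Fintype ι]

/-- The set of those marked points `v j` for which `x j = 1`. These are the points deleted from a
set to switch off the entries `x` of the tuple it agrees with. -/
def marksOf (v : ι → V) (x : ι → Bool) : Finset V :=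
  image v {j | x j = true}

lemma apply_mem_marksOf {v : ι → V} (hv : Function.Injective v) {x : ι → Bool} {j : ι} :
    v j ∈ marksOf v x ↔ x j = true := by
  simp [marksOf, hv.eq_iff]

lemma card_le_card_sdiff_marksOf_add (I : Finset V) (v : ι → V) (x : ι → Bool) :
    #I ≤ #(I \ marksOf v x) + #{j | x j = true} :=
  calc
    #I ≤ #(I \ marksOf v x) + #(marksOf v x) := card_le_card_sdiff_add_card
    _ ≤ #(I \ marksOf v x) + #{j | x j = true} := by gcongr; exact card_image_le

end Marks

variable {𝓕 : Set (Finset V)} {v : ι → V}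

lemma sdiff_marksOf_mem_agreeing [DecidableEq V] [Fintype ι] (h𝓕 : IsLowerSet 𝓕)
    (hv : Function.Injective v) {I : Finset V} {y : ι → Bool} (hI : I ∈ agreeing 𝓕 v y)
    (z : ι → Bool) : I \ marksOf v z ∈ agreeing 𝓕 v (y \ z) := by
  refine ⟨h𝓕 sdiff_subset hI.1, fun j ↦ ?_⟩
  rw [Finset.mem_sdiff, hI.2, apply_mem_marksOf hv]
  simp [sdiff_eq]

lemma agreeing_sdiff_nonempty [Finite ι] (h𝓕 : IsLowerSet 𝓕) (hv : Function.Injective v)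
    {y : ι → Bool} (hy : (agreeing 𝓕 v y).Nonempty) (z : ι → Bool) :
    (agreeing 𝓕 v (y \ z)).Nonempty := by
  cases nonempty_fintype ι
  obtain ⟨I, hI⟩ := hy
  exact ⟨_, sdiff_marksOf_mem_agreeing h𝓕 hv hI z⟩

variable [Fintype ι]

lemma le_add_card_of_mem_upperBounds_agreeing (h𝓕 : IsLowerSet 𝓕) (hv : Function.Injective v)
    {y z : ι → Bool} {m n : ℕ} (hm : m ∈ card '' agreeing 𝓕 v y)
    (hn : n ∈ upperBounds (card '' agreeing 𝓕 v (y \ z))) :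
    m ≤ n + #{j | z j = true} := by
  obtain ⟨I, hI, rfl⟩ := hm
  calc
    #I ≤ #(I \ marksOf v z) + #{j | z j = true} := card_le_card_sdiff_marksOf_add I v z
    _ ≤ n + #{j | z j = true} := by
      gcongr
      exact hn ⟨_, sdiff_marksOf_mem_agreeing h𝓕 hv hI z, rfl⟩

theorem stmt12_general (h𝓕 : IsLowerSet 𝓕) (hv : Function.Injective v) (M : (ι → Bool) → ℕ)
    (hM : ∀ x, (agreeing 𝓕 v x).Nonempty → IsGreatest (card '' agreeing 𝓕 v x) (M x))
    (htop : (agreeing 𝓕 v ⊤).Nonempty) (hdiff : M ⊤ = M ⊥ + Fintype.card ι) (x : ι → Bool) :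
    (agreeing 𝓕 v x).Nonempty ∧ M x = M ⊥ + #{j | x j = true} := by
  have hx : (agreeing 𝓕 v x).Nonempty := by
    simpa using agreeing_sdiff_nonempty h𝓕 hv htop xᶜ
  have hbot : (agreeing 𝓕 v ⊥).Nonempty := by
    simpa using agreeing_sdiff_nonempty h𝓕 hv hx x
  have upper : M x ≤ M ⊥ + #{j | x j = true} :=
    le_add_card_of_mem_upperBounds_agreeing h𝓕 hv (hM x hx).1 (by simpa using (hM ⊥ hbot).2)
  have lower : M ⊤ ≤ M x + #{j | xᶜ j = true} :=
    le_add_card_of_mem_upperBounds_agreeing h𝓕 hv (hM ⊤ htop).1 (by simpa using (hM x hx).2)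
  have hcard := card_true_add_card_compl_true x
  exact ⟨hx, by omega⟩

end LowerSet

lemma isLowerSet_isIndepSet' {V : Type} (G : SimpleGraph V) :
    IsLowerSet {I : Finset V | G.IsIndepSet' (I : Set V)} :=
  fun _ _ hJI hI ↦ Set.Pairwise.mono (coe_subset.2 hJI) hI

theorem stmt12 {V : Type} [Fintype V] [DecidableEq V] (G : SimpleGraph V)
    {k : ℕ} (v : Fin k → V) (hv : Function.Injective v)
    (M : (Fin k → Bool) → ℕ)
    (hM : ∀ x, M x = ((Finset.univ : Finset (Finset V)).filter
        (fun I : Finset V =>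
          G.IsIndepSet' (↑I : Set V) ∧ ∀ j, v j ∈ I ↔ x j = true)).sup Finset.card)
    (hex1 : ∃ I : Finset V, G.IsIndepSet' (↑I : Set V) ∧ ∀ j, v j ∈ I ↔ oneT k j = true)
    (hdiff : M (oneT k) = M (zeroT k) + k) :
    ∀ x : Fin k → Bool,
      (∃ I : Finset V, G.IsIndepSet' (↑I : Set V) ∧ ∀ j, v j ∈ I ↔ x j = true) ∧
        M x = M (zeroT k) + wt x := by
  exact stmt12_general (isLowerSet_isIndepSet' G) hv M
    (fun x hx ↦ hM x ▸ isGreatest_image_sup_filter card hx) hex1 (by rwa [Fintype.card_fin])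

end
end

section
/- Let G be a finite graph with k marked vertices v_1,…,v_k that is maximally independent. Then for every x ∈ {0,1}^k, the conditioned independence polynomial Z_G(λ, x) is a polynomial in λ of degree #I(0,…,0) + (x_1 + ⋯ + x_k) with leading coefficient 1. Consequently, for every x ∈ {0,1}^k, λ^{−(x_1+⋯+x_k)} · Z_G(λ, x) / Z_G(λ, (0,…,0)) → 1 as |λ| → ∞; equivalently, the point of ℙ^{2^k−1} with homogeneous coordinates (λ^{−(x_1+⋯+x_k)} Z_G(λ, x))_{x∈{0,1}^k} converges to [1 : ⋯ : 1] as |λ| → ∞. -/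
open scoped Classical
open Finset Filter

noncomputable section

/-!
Deleting the marked vertices `v_j` with `x_j = 1` from an independent set that agrees with `x`
leaves an independent set that agrees with `(0, …, 0)`, so it loses at most `wt x` vertices and
what remains has at most `#I(0,…,0)` of them. If `#I(1,…,1) = #I(0,…,0) + k`, this is sharp at
`(1, …, 1)`: the marked vertices are distinct and can all be added to `I(0,…,0)` at once. Hence
`I(x) = I(0,…,0) ∪ {v_j | x_j = 1}` for every `x`, and the leading term of `Z(λ, x)` is
`λ ^ (#I(0,…,0) + wt x)`.
-/

open scoped Polynomial Topology

lemma natDegree_sum_X_pow_and_monic {ι R : Type*} [Semiring R] [Nontrivial R] {s : Finset ι}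
    {f : ι → ℕ} {i : ι} (hi : i ∈ s) (hlt : ∀ j ∈ s, j ≠ i → f j < f i) :
    (∑ j ∈ s, (Polynomial.X : R[X]) ^ f j).natDegree = f i ∧
      (∑ j ∈ s, (Polynomial.X : R[X]) ^ f j).Monic := by
  have hdeg : (∑ j ∈ s.erase i, (Polynomial.X : R[X]) ^ f j).degree < f i := by
    refine (Polynomial.degree_sum_le _ _).trans_lt
      ((Finset.sup_lt_iff (WithBot.bot_lt_coe _)).2 fun j hj => ?_)
    rw [Polynomial.degree_X_pow]
    exact Nat.cast_lt.2 (hlt j (mem_of_mem_erase hj) (ne_of_mem_erase hj))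
  rw [← add_sum_erase s _ hi]
  refine ⟨?_, Polynomial.monic_X_pow_add hdeg⟩
  rw [Polynomial.natDegree_add_eq_left_of_degree_lt (by rwa [Polynomial.degree_X_pow]),
    Polynomial.natDegree_X_pow]

lemma tendsto_eval_div_eval_cobounded {𝕜 : Type*} [NormedField 𝕜] {p q : 𝕜[X]}
    (hpq : p.natDegree = q.natDegree) :
    Tendsto (fun z => p.eval z / q.eval z) (Bornology.cobounded 𝕜)
      (𝓝 (p.leadingCoeff / q.leadingCoeff)) := by
  refine ((p.isEquivalent_cobounded_leading_monomial.div
    q.isEquivalent_cobounded_leading_monomial).congr_right ?_).tendsto_const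
  filter_upwards [Bornology.eventually_ne_cobounded (0 : 𝕜)] with z hz
  rw [hpq]
  exact mul_div_mul_right _ _ (pow_ne_zero _ hz)

namespace MGraph

variable {G : MGraph}

lemma IndepFinset.mono {I J : Finset G.V} (hJ : G.IndepFinset J) (hIJ : I ⊆ J) :
    G.IndepFinset I :=
  fun v hv w hw => hJ v (hIJ hv) w (hIJ hw)

lemma indepFinset_filter_iff {σ : G.V → Bool} :
    G.IndepFinset {v | σ v = true} ↔ G.Indep σ := by
  simp only [IndepFinset, Indep, mem_filter, mem_univ, true_and]
  grind

end MGraph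

lemma wt_oneT (k : ℕ) : wt (oneT k) = k := by
  simp [wt, oneT]

namespace MarkedGraph

variable {k : ℕ} {A : MarkedGraph k} {x : Fin k → Bool} {I J I₀ : Finset A.G.V}

/-- The family of independent sets agreeing with `x`: the monomials of `Z(λ, x)`, and the
candidates for `I(x)`. -/
def IsAdmissible (A : MarkedGraph k) (x : Fin k → Bool) (I : Finset A.G.V) : Prop :=
  A.G.IndepFinset I ∧ Agrees A I x

/-- `I` is the set `I(x)`. Uniqueness is encoded by the strict inequality. -/
def IsStrictMax (A : MarkedGraph k) (x : Fin k → Bool) (I : Finset A.G.V) : Prop :=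
  A.IsAdmissible x I ∧ ∀ J, A.IsAdmissible x J → J ≠ I → #J < #I

/-- The set `{v_j | x_j = 1}` of marked vertices selected by `x`. -/
def marked (A : MarkedGraph k) (x : Fin k → Bool) : Finset A.G.V :=
  ({j | x j = true} : Finset (Fin k)).image A.mark

/-- A weak form of maximal independence, with `I₀` in the role of `I(0,…,0)`: the set `I(x)` is
required to be unique only at `x = (0,…,0)`, and at `x = (1,…,1)` some admissible set has to
exceed it by `k` vertices. -/
structure HasFreeMarks (A : MarkedGraph k) (I₀ : Finset A.G.V) : Prop where
  isStrictMax : A.IsStrictMax (zeroT k) I₀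
  exists_isAdmissible_oneT : ∃ I₁, A.IsAdmissible (oneT k) I₁ ∧ #I₀ + k ≤ #I₁

lemma mem_marked {v : A.G.V} : v ∈ A.marked x ↔ ∃ j, x j = true ∧ A.mark j = v := by
  simp [marked]

lemma card_marked_le (A : MarkedGraph k) (x : Fin k → Bool) : #(A.marked x) ≤ wt x :=
  card_image_le

lemma card_marked_of_injective (hinj : Function.Injective A.mark) : #(A.marked x) = wt x :=
  card_image_of_injective _ hinj

lemma marked_subset_marked_oneT (A : MarkedGraph k) (x : Fin k → Bool) :
    A.marked x ⊆ A.marked (oneT k) :=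
  image_subset_image fun _ _ => by simp [oneT]

lemma mark_injective_of_le_card_marked_oneT (h : k ≤ #(A.marked (oneT k))) :
    Function.Injective A.mark := by
  have hcard : #((univ : Finset (Fin k)).image A.mark) = #(univ : Finset (Fin k)) :=
    le_antisymm card_image_le (by simpa [marked, oneT] using h)
  simpa [Set.injOn_univ] using card_image_iff.1 hcard

lemma IsAdmissible.marked_subset (h : A.IsAdmissible x I) : A.marked x ⊆ I := by
  intro v hv
  obtain ⟨j, hj, rfl⟩ := mem_marked.1 hv
  exact (h.2 j).2 hj

lemma IsAdmissible.mark_notMem (h : A.IsAdmissible (zeroT k) I) (j : Fin k) : A.mark j ∉ I :=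
  fun hj => Bool.false_ne_true ((h.2 j).1 hj)

lemma IsAdmissible.disjoint_marked (h : A.IsAdmissible (zeroT k) I) :
    Disjoint I (A.marked x) := by
  rw [disjoint_right]
  intro v hv
  obtain ⟨j, -, rfl⟩ := mem_marked.1 hv
  exact h.mark_notMem j

lemma IsAdmissible.sdiff_marked (h : A.IsAdmissible x I) :
    A.IsAdmissible (zeroT k) (I \ A.marked x) := by
  refine ⟨h.1.mono sdiff_subset, fun j => iff_of_false ?_ Bool.false_ne_true⟩
  rw [Finset.mem_sdiff, not_and_not_right]
  exact fun hj => mem_marked.2 ⟨j, (h.2 j).1 hj, rfl⟩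

lemma IsStrictMax.eq_union_marked_or_card_lt (h₀ : A.IsStrictMax (zeroT k) I₀)
    (hJ : A.IsAdmissible x J) : J = I₀ ∪ A.marked x ∨ #J < #I₀ + wt x := by
  rw [or_iff_not_imp_left]
  intro hne
  have hlt : #(J \ A.marked x) < #I₀ := h₀.2 _ hJ.sdiff_marked fun heq =>
    hne (by rw [← heq, sdiff_union_of_subset hJ.marked_subset])
  calc #J = #(J \ A.marked x) + #(A.marked x) :=
        (card_sdiff_add_card_eq_card hJ.marked_subset).symm
    _ < #I₀ + wt x := add_lt_add_of_lt_of_le hlt (A.card_marked_le x)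

namespace HasFreeMarks

lemma isAdmissible_union_marked_oneT (h : A.HasFreeMarks I₀) :
    A.IsAdmissible (oneT k) (I₀ ∪ A.marked (oneT k)) ∧
      #I₀ + k ≤ #(I₀ ∪ A.marked (oneT k)) := by
  obtain ⟨I₁, h₁, hcard⟩ := h.exists_isAdmissible_oneT
  have heq : I₁ = I₀ ∪ A.marked (oneT k) :=
    (h.isStrictMax.eq_union_marked_or_card_lt h₁).resolve_right <| by
      rw [wt_oneT]
      exact hcard.not_gt
  exact heq ▸ ⟨h₁, hcard⟩

lemma mark_injective (h : A.HasFreeMarks I₀) : Function.Injective A.mark :=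
  mark_injective_of_le_card_marked_oneT <| Nat.le_of_add_le_add_left <|
    h.isAdmissible_union_marked_oneT.2.trans (card_union_le _ _)

lemma isAdmissible_union_marked (h : A.HasFreeMarks I₀) (x : Fin k → Bool) :
    A.IsAdmissible x (I₀ ∪ A.marked x) := by
  refine ⟨h.isAdmissible_union_marked_oneT.1.1.mono
    (union_subset_union_right (A.marked_subset_marked_oneT x)), fun j => ?_⟩
  rw [mem_union, or_iff_right (h.isStrictMax.1.mark_notMem j), mem_marked]
  simp only [h.mark_injective.eq_iff, exists_eq_right]

lemma card_union_marked (h : A.HasFreeMarks I₀) (x : Fin k → Bool) :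
    #(I₀ ∪ A.marked x) = #I₀ + wt x := by
  rw [card_union_of_disjoint h.isStrictMax.1.disjoint_marked,
    card_marked_of_injective h.mark_injective]

lemma isStrictMax_union_marked (h : A.HasFreeMarks I₀) (x : Fin k → Bool) :
    A.IsStrictMax x (I₀ ∪ A.marked x) :=
  ⟨h.isAdmissible_union_marked x, fun _ hJ hne =>
    h.card_union_marked x ▸ (h.isStrictMax.eq_union_marked_or_card_lt hJ).resolve_left hne⟩

end HasFreeMarks

lemma isAdmissible_filter_iff {σ : A.G.V → Bool} :
    A.IsAdmissible x {v | σ v = true} ↔ A.G.Indep σ ∧ ∀ j, σ (A.mark j) = x j := by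
  rw [IsAdmissible, MGraph.indepFinset_filter_iff]
  simp only [Agrees, mem_filter, mem_univ, true_and, Bool.coe_iff_coe]

lemma Z_eq_sum (R : Type) [CommRing R] (lam : R) (A : MarkedGraph k) (x : Fin k → Bool) :
    A.Z R lam x = ∑ I with A.IsAdmissible x I, lam ^ #I := by
  rw [Z, Zcond, ← sum_filter]
  refine sum_bij' (fun σ _ => ({v | σ v = true} : Finset A.G.V)) (fun I _ v => decide (v ∈ I))
    ?_ ?_ ?_ ?_ ?_
  · simp [isAdmissible_filter_iff]
  · simp [← isAdmissible_filter_iff]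
  · simp
  · simp
  · simp [MGraph.ones]

lemma map_Z {R S : Type} [CommRing R] [CommRing S] (f : R →+* S) (lam : R) (A : MarkedGraph k)
    (x : Fin k → Bool) : f (A.Z R lam x) = A.Z S (f lam) x := by
  simp only [Z_eq_sum, map_sum, map_pow]

lemma eval_Z {R : Type} [CommRing R] (lam : R) (A : MarkedGraph k) (x : Fin k → Bool) :
    (A.Z R[X] Polynomial.X x).eval lam = A.Z R lam x := by
  simpa using map_Z (Polynomial.evalRingHom lam) Polynomial.X A x

lemma IsStrictMax.natDegree_Z_and_monic (R : Type) [CommRing R] [Nontrivial R]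
    (h : A.IsStrictMax x I) :
    (A.Z R[X] Polynomial.X x).natDegree = #I ∧ (A.Z R[X] Polynomial.X x).Monic := by
  rw [Z_eq_sum]
  exact natDegree_sum_X_pow_and_monic (mem_filter.2 ⟨mem_univ I, h.1⟩)
    fun J hJ => h.2 J (mem_filter.1 hJ).2

namespace HasFreeMarks

lemma natDegree_Z_and_monic (R : Type) [CommRing R] [Nontrivial R] (h : A.HasFreeMarks I₀)
    (x : Fin k → Bool) :
    (A.Z R[X] Polynomial.X x).natDegree = #I₀ + wt x ∧ (A.Z R[X] Polynomial.X x).Monic :=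
  h.card_union_marked x ▸ (h.isStrictMax_union_marked x).natDegree_Z_and_monic R

lemma tendsto_Z_div (𝕜 : Type) [NormedField 𝕜] (h : A.HasFreeMarks I₀) (x : Fin k → Bool) :
    Tendsto (fun lam : 𝕜 => A.Z 𝕜 lam x / (lam ^ wt x * A.Z 𝕜 lam (zeroT k)))
      (Bornology.cobounded 𝕜) (𝓝 1) := by
  obtain ⟨hdeg, hmonic⟩ := h.natDegree_Z_and_monic 𝕜 x
  obtain ⟨hdeg₀, hmonic₀⟩ := h.isStrictMax.natDegree_Z_and_monic 𝕜
  have hmonic' := (Polynomial.monic_X_pow (wt x)).mul hmonic₀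
  have hdeg' : (A.Z 𝕜[X] Polynomial.X x).natDegree =
      (Polynomial.X ^ wt x * A.Z 𝕜[X] Polynomial.X (zeroT k)).natDegree := by
    rw [Polynomial.natDegree_X_pow_mul _ hmonic₀.ne_zero, hdeg, hdeg₀]
  simpa [hmonic.leadingCoeff, hmonic'.leadingCoeff, eval_Z] using
    tendsto_eval_div_eval_cobounded hdeg'

end HasFreeMarks

end MarkedGraph

lemma MaxIndependent.hasFreeMarks {k : ℕ} {A : MarkedGraph k} {I₀ : Finset A.G.V}
    (hmax : MaxIndependent A) (h₀ : A.IsAdmissible (zeroT k) I₀)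
    (hle : ∀ J, A.IsAdmissible (zeroT k) J → #J ≤ #I₀) : A.HasFreeMarks I₀ := by
  obtain ⟨I, hI, hI_le, hI_unique⟩ := hmax.1 (zeroT k)
  obtain ⟨I₁, h₁, h₁_le, -⟩ := hmax.1 (oneT k)
  obtain rfl : I₀ = I := hI_unique I₀ h₀ (le_antisymm (hI_le I₀ h₀) (hle I hI))
  exact ⟨⟨h₀, fun J hJ hne => (hle J hJ).lt_of_ne fun heq => hne (hI_unique J hJ heq)⟩,
    I₁, h₁, (hmax.2 I₁ I₀ ⟨h₁, h₁_le⟩ ⟨h₀, hle⟩).ge⟩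

theorem stmt13_general {𝕜 : Type} [NormedField 𝕜] {k : ℕ} {A : MarkedGraph k}
    {I₀ : Finset A.G.V} (h : A.HasFreeMarks I₀) :
    (∀ x : Fin k → Bool,
      (A.Z 𝕜[X] Polynomial.X x).natDegree = #I₀ + wt x ∧ (A.Z 𝕜[X] Polynomial.X x).Monic) ∧
    ∀ x : Fin k → Bool,
      Tendsto (fun lam : 𝕜 => A.Z 𝕜 lam x / (lam ^ wt x * A.Z 𝕜 lam (zeroT k)))
        (comap (fun z : 𝕜 => ‖z‖) atTop) (𝓝 1) :=
  ⟨h.natDegree_Z_and_monic 𝕜, comap_norm_atTop (E := 𝕜) ▸ h.tendsto_Z_div 𝕜⟩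

-- STATEMENT 13
theorem stmt13 {k : ℕ} (A : MarkedGraph k) (hmax : MaxIndependent A) :
    (∀ (x : Fin k → Bool) (I₀ : Finset A.G.V),
      ((A.G.IndepFinset I₀ ∧ Agrees A I₀ (zeroT k)) ∧
        ∀ J, A.G.IndepFinset J ∧ Agrees A J (zeroT k) → J.card ≤ I₀.card) →
      (Zcond (Polynomial ℂ) Polynomial.X A.G A.mark x).natDegree = I₀.card + wt x ∧
        (Zcond (Polynomial ℂ) Polynomial.X A.G A.mark x).Monic) ∧
    ∀ x : Fin k → Bool,
      Filter.Tendsto (fun lam : ℂ => A.Z ℂ lam x / (lam ^ wt x * A.Z ℂ lam (zeroT k)))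
        (Filter.comap (fun z : ℂ => ‖z‖) Filter.atTop) (nhds 1) := by
  obtain ⟨I, hI, hI_le, -⟩ := hmax.1 (zeroT k)
  exact ⟨fun x I₀ h₀ => (stmt13_general (hmax.hasFreeMarks h₀.1 h₀.2)).1 x,
    (stmt13_general (hmax.hasFreeMarks hI hI_le)).2⟩

end
end
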